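/- arXiv:1702.05426 — 4 statements merged into one kernel-verified Lean document; each statement's English description precedes it below -/
import Mathlib

section
/- Let α, β be real numbers with β > 0 and 1 < α ≤ β + 1, and let V_{α,β}(t) = ∑_{p prime} p^{−α} cos(2π p^β t). Then for every t₀ ∈ ℝ, every local Hölder exponent of V_{α,β} at t₀ is at most α/β: if s ∈ (0,1] and there exist ε > 0 and C > 0 such that |V_{α,β}(x) − V_{α,β}(y)| ≤ C·|x − y|^s for all x, y with |x − t₀| < ε and |y − t₀| < ε, then s ≤ α/β. -/
/-!
Localise the series by a smooth bump `φ` supported near `t₀`. A compactly supported function which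
is Hölder of exponent `s` has Fourier transform `O(|w|^{-s})`, as one sees by comparing it with its
translate by half a period. On the other hand, the frequencies `±q^β` other than `p^β` lie at
distance at least `p^{β-1}` from `p^β`, a positive power of `p^β` when `β > 1`, so the rapid decay
of `𝓕 φ` makes the Fourier transform of the localised series at `p^β` equal to `p^{-α} 𝓕 φ(0) / 2`
up to an error `O(p^{-βs})`. Hence `p^{-α} = O(p^{-βs})`, that is, `s ≤ α / β`. If `β ≤ 1`, then
already `s ≤ 1 < α ≤ α / β`.
-/

open Asymptotics Bornology Filter FourierTransform MeasureTheory Metric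
open scoped ContDiff NNReal RealInnerProductSpace SchwartzMap

theorem holderOnWith_of_dist_le {X Y : Type*} [PseudoMetricSpace X] [PseudoMetricSpace Y]
    {f : X → Y} {A : Set X} {C s : ℝ≥0}
    (hf : ∀ x ∈ A, ∀ y ∈ A, dist (f x) (f y) ≤ C * dist x y ^ (s : ℝ)) :
    HolderOnWith C s f A := by
  intro x hx y hy
  rw [edist_nndist, edist_nndist, ← ENNReal.coe_rpow_of_nonneg _ s.coe_nonneg]
  exact_mod_cast hf x hx y hy

theorem holderOnWith_mul {X R : Type*} [PseudoMetricSpace X] [SeminormedRing R]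
    {f g : X → R} {A : Set X} {C D M B s : ℝ≥0}
    (hf : HolderOnWith C s f A) (hg : HolderOnWith D s g A)
    (hfM : ∀ x ∈ A, ‖f x‖ ≤ M) (hgB : ∀ x ∈ A, ‖g x‖ ≤ B) :
    HolderOnWith (C * B + M * D) s (fun x ↦ f x * g x) A := by
  refine holderOnWith_of_dist_le fun x hx y hy ↦ ?_
  have hfxy : ‖f x - f y‖ ≤ C * dist x y ^ (s : ℝ) := dist_eq_norm (f x) (f y) ▸ hf.dist_le hx hy
  have hgxy : ‖g x - g y‖ ≤ D * dist x y ^ (s : ℝ) := dist_eq_norm (g x) (g y) ▸ hg.dist_le hx hy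
  calc dist (f x * g x) (f y * g y)
      = ‖(f x - f y) * g x + f y * (g x - g y)‖ := by rw [dist_eq_norm]; congr 1; noncomm_ring
    _ ≤ ‖f x - f y‖ * ‖g x‖ + ‖f y‖ * ‖g x - g y‖ :=
        (norm_add_le _ _).trans (add_le_add (norm_mul_le _ _) (norm_mul_le _ _))
    _ ≤ C * dist x y ^ (s : ℝ) * B + M * (D * dist x y ^ (s : ℝ)) := by
        gcongr
        exacts [hgB x hx, hfM y hy]
    _ = ↑(C * B + M * D) * dist x y ^ (s : ℝ) := by push_cast; ring

theorem norm_sub_translate_le_indicator {V E : Type*} [SeminormedAddCommGroup V]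
    [SeminormedAddCommGroup E] {g : V → E} {x₀ : V} {r R : ℝ} {C s : ℝ≥0}
    (hg : HolderOnWith C s g (ball x₀ R)) (hsupp : Function.support g ⊆ ball x₀ r)
    {h : V} (hh : ‖h‖ ≤ R - r) (v : V) :
    ‖g v - g (v + h)‖ ≤ (ball x₀ R).indicator (fun _ ↦ C * ‖h‖ ^ (s : ℝ)) v := by
  have eq_zero_of_far {x y : V} (hx : x ∉ ball x₀ R) (hxy : dist x y = ‖h‖) :
      g x = 0 ∧ g y = 0 := by
    simp only [mem_ball, not_lt] at hx
    have := dist_triangle x y x₀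
    constructor <;> refine Function.notMem_support.1 fun hmem ↦ ?_ <;>
      linarith [mem_ball.1 (hsupp hmem), norm_nonneg h]
  by_cases hv : v ∈ ball x₀ R
  · rw [Set.indicator_of_mem hv]
    by_cases hvh : v + h ∈ ball x₀ R
    · simpa [dist_eq_norm] using hg.dist_le hv hvh
    · obtain ⟨hgvh, hgv⟩ := eq_zero_of_far hvh (y := v) (by simp)
      rw [hgv, hgvh, sub_zero, norm_zero]
      positivity
  · obtain ⟨hgv, hgvh⟩ := eq_zero_of_far hv (y := v + h) (by simp)
    rw [hgv, hgvh, sub_zero, norm_zero, Set.indicator_of_notMem hv]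

section Separation

variable {V E ι : Type*} [NormedAddCommGroup E]

theorem norm_sub_le_of_hasSum {a : ι → E} {b : ι → ℝ} {T : E} (ha : HasSum a T) (hb : Summable b)
    {i : ι} (hbi : 0 ≤ b i) (hab : ∀ j, j ≠ i → ‖a j‖ ≤ b j) : ‖T - a i‖ ≤ ∑' j, b j := by
  classical
  have hdel : HasSum (Function.update a i 0) (T - a i) := by
    convert ha.update i 0 using 1
    abel
  refine hdel.norm_le_of_bounded hb.hasSum fun j ↦ ?_
  rcases eq_or_ne j i with rfl | hj
  · simpa using hbi
  · simpa [hj] using hab j hj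

theorem exists_eventually_norm_comp_sub_le [SeminormedAddCommGroup V] {μ : ι → V} {F : V → E}
    {κ s : ℝ} (hκ : 0 < κ) (hs : 0 ≤ s) (hF : F =O[cobounded V] fun w ↦ ‖w‖ ^ (-(s / κ)))
    {l : Filter ι} (hμ : Tendsto μ l (cobounded V))
    (hsep : ∀ i j, i ≠ j → ‖μ i‖ ^ κ ≤ ‖μ i - μ j‖) :
    ∃ K ≥ 0, ∀ᶠ i in l, ∀ j, j ≠ i → ‖F (μ i - μ j)‖ ≤ K * ‖μ i‖ ^ (-s) := by
  obtain ⟨K, hK, hFK⟩ := hF.exists_pos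
  obtain ⟨ρ, -, hρ⟩ := hasBasis_cobounded_norm.eventually_iff.1 hFK.bound
  have hnorm := tendsto_norm_cobounded_atTop.comp hμ
  refine ⟨K, hK.le, ?_⟩
  filter_upwards [hnorm.eventually_gt_atTop 0,
    ((tendsto_rpow_atTop hκ).comp hnorm).eventually_ge_atTop ρ] with i hi hiρ j hji
  have hgap := hsep i j hji.symm
  have hpow : 0 < ‖μ i‖ ^ κ := Real.rpow_pos_of_pos hi κ
  calc ‖F (μ i - μ j)‖
      ≤ K * ‖μ i - μ j‖ ^ (-(s / κ)) := by
        simpa only [Real.norm_of_nonneg (Real.rpow_nonneg (norm_nonneg _) _)]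
          using hρ (hiρ.trans hgap)
    _ ≤ K * (‖μ i‖ ^ κ) ^ (-(s / κ)) :=
        mul_le_mul_of_nonneg_left (Real.rpow_le_rpow_of_nonpos hpow hgap
          (neg_nonpos.2 (by positivity))) hK.le
    _ = K * ‖μ i‖ ^ (-s) := by
        rw [← Real.rpow_mul (norm_nonneg _)]
        congr 2
        field_simp

theorem isBigO_hasSum_sub_diagonal [SeminormedAddCommGroup V] [NormedSpace ℂ E] {c : ι → ℂ}
    {μ : ι → V} {F : V → E} (hc : Summable fun i ↦ ‖c i‖) {κ s : ℝ} (hκ : 0 < κ) (hs : 0 ≤ s)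
    (hF : F =O[cobounded V] fun w ↦ ‖w‖ ^ (-(s / κ))) {l : Filter ι}
    (hμ : Tendsto μ l (cobounded V)) (hsep : ∀ i j, i ≠ j → ‖μ i‖ ^ κ ≤ ‖μ i - μ j‖) {T : ι → E}
    (hT : ∀ i, HasSum (fun j ↦ c j • F (μ i - μ j)) (T i)) :
    (fun i ↦ T i - c i • F 0) =O[l] fun i ↦ ‖μ i‖ ^ (-s) := by
  obtain ⟨K, hK, hFK⟩ := exists_eventually_norm_comp_sub_le hκ hs hF hμ hsep
  refine IsBigO.of_bound ((∑' j, ‖c j‖) * K) (hFK.mono fun i hi ↦ ?_)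
  have hterm (j : ι) (hji : j ≠ i) : ‖c j • F (μ i - μ j)‖ ≤ ‖c j‖ * (K * ‖μ i‖ ^ (-s)) := by
    rw [norm_smul]
    gcongr
    exact hi j hji
  have hsub := norm_sub_le_of_hasSum (hT i) (hc.mul_right _) (by positivity) hterm
  rwa [sub_self, tsum_mul_right, ← mul_assoc,
    ← Real.norm_of_nonneg (Real.rpow_nonneg (norm_nonneg (μ i)) _)] at hsub

theorem continuous_of_hasSum_char [NormedAddCommGroup V] [InnerProductSpace ℝ V] {c : ι → ℂ}
    {μ : ι → V} {f : V → ℂ} (hc : Summable fun i ↦ ‖c i‖)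
    (hf : ∀ v, HasSum (fun i ↦ 𝐞 ⟪v, μ i⟫ • c i) (f v)) : Continuous f := by
  rw [funext fun v ↦ (hf v).tsum_eq.symm]
  exact continuous_tsum (fun i ↦ by fun_prop) hc fun i v ↦ (Circle.norm_smul _ _).le

end Separation

section Fourier

variable {V E : Type*} [NormedAddCommGroup V] [InnerProductSpace ℝ V] [FiniteDimensional ℝ V]
  [MeasurableSpace V] [BorelSpace V] [NormedAddCommGroup E] [NormedSpace ℂ E]

theorem isBigO_fourier_of_holderOnWith {g : V → E} {x₀ : V} {r R : ℝ} {C s : ℝ≥0}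
    (hg : HolderOnWith C s g (ball x₀ R)) (hsupp : Function.support g ⊆ ball x₀ r) (hrR : r < R)
    (hint : Integrable g) :
    𝓕 g =O[cobounded V] fun w ↦ ‖w‖ ^ (-s : ℝ) := by
  refine IsBigO.of_bound (1 / 2 * (volume.real (ball x₀ R) * (C * (1 / 2) ^ (s : ℝ)))) ?_
  filter_upwards [tendsto_norm_cobounded_atTop.eventually_ge_atTop (1 / (2 * (R - r))),
    tendsto_norm_cobounded_atTop.eventually_gt_atTop (0 : ℝ)] with w hw hw0
  set h : V := (1 / (2 * ‖w‖ ^ 2)) • w with h_def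
  have h_norm : ‖h‖ = 1 / 2 * ‖w‖⁻¹ := by
    rw [h_def, norm_smul, Real.norm_of_nonneg (by positivity)]
    field_simp
  have h_le : ‖h‖ ≤ R - r := by
    have : 0 < R - r := sub_pos.2 hrR
    rw [div_le_iff₀ (by positivity)] at hw
    rw [h_norm]
    field_simp
    linarith
  rw [Real.fourier_eq, fourierIntegral_eq_half_sub_half_period_translate (norm_pos_iff.1 hw0) hint,
    norm_smul, Real.norm_of_nonneg (by positivity)]
  calc ‖(1 / 2 : ℂ)‖ * ‖∫ v, 𝐞 (-⟪v, w⟫) • (g v - g (v + h))‖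
      ≤ ‖(1 / 2 : ℂ)‖ * ∫ v, (ball x₀ R).indicator (fun _ ↦ C * ‖h‖ ^ (s : ℝ)) v := by
        gcongr
        refine norm_integral_le_of_norm_le ?_ (.of_forall fun v ↦ ?_)
        · exact (integrable_indicator_iff measurableSet_ball).2
            (integrableOn_const measure_ball_lt_top.ne)
        · rw [Circle.norm_smul]
          exact norm_sub_translate_le_indicator hg hsupp h_le v
    _ = _ := by
        rw [integral_indicator_const _ measurableSet_ball, h_norm,
          Real.mul_rpow (by norm_num) (by positivity), Real.inv_rpow hw0.le, Real.rpow_neg hw0.le,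
          smul_eq_mul]
        norm_num
        ring

theorem isBigO_fourier_mul_schwartzMap {f : V → ℂ} (hfc : Continuous f) {M : ℝ≥0}
    (hfM : ∀ v, ‖f v‖ ≤ M) {x₀ : V} {r R : ℝ} (hrR : r < R) {C s : ℝ≥0} (hs : s ≤ 1)
    (hf : HolderOnWith C s f (ball x₀ R)) (φ : 𝓢(V, ℂ)) (hφ : Function.support φ ⊆ ball x₀ r) :
    𝓕 (fun v ↦ f v * φ v) =O[cobounded V] fun w ↦ ‖w‖ ^ (-s : ℝ) := by
  have hφ_compact : HasCompactSupport φ := .of_support_subset_isCompact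
    (isCompact_closedBall x₀ r) (hφ.trans ball_subset_closedBall)
  obtain ⟨K, hK⟩ := (φ.smooth 1).lipschitzWith_of_hasCompactSupport hφ_compact one_ne_zero
  obtain ⟨B, hB⟩ := hφ_compact.exists_bound_of_continuous φ.continuous
  have hφ_holder := (hK.lipschitzOnWith (s := ball x₀ R)).holderOnWith.of_le
    (D := 2 * R.toNNReal) (fun x hx y hy ↦ ?_) hs
  · refine isBigO_fourier_of_holderOnWith (holderOnWith_mul hf hφ_holder (fun v _ ↦ hfM v)
      fun v _ ↦ (hB v).trans B.le_coe_toNNReal) ?_ hrR ?_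
    · exact (Function.support_mul_subset_right f φ).trans hφ
    · exact φ.integrable.bdd_mul hfc.aestronglyMeasurable (.of_forall hfM)
  · rw [edist_nndist, ENNReal.coe_le_coe, ← NNReal.coe_le_coe, coe_nndist]
    have := R.le_coe_toNNReal
    push_cast
    linarith [dist_triangle_right x y x₀, mem_ball.1 hx, mem_ball.1 hy]

theorem exists_schwartzMap_support_subset_ball (x₀ : V) {r : ℝ} (hr : 0 < r) :
    ∃ φ : 𝓢(V, ℂ), Function.support φ ⊆ ball x₀ r ∧ 𝓕 (φ : V → ℂ) 0 ≠ 0 := by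
  let b : ContDiffBump x₀ := ⟨r / 2, r, half_pos hr, half_lt_self hr⟩
  have hb_compact : HasCompactSupport fun v ↦ (b v : ℂ) :=
    b.hasCompactSupport.comp_left Complex.ofReal_zero
  have hb_smooth : ContDiff ℝ ∞ fun v ↦ (b v : ℂ) := Complex.ofRealCLM.contDiff.comp b.contDiff
  refine ⟨hb_compact.toSchwartzMap hb_smooth, fun v hv ↦ ?_, ?_⟩
  · rw [← b.support_eq]
    exact Complex.ofReal_ne_zero.1 hv
  · change 𝓕 (fun v ↦ (b v : ℂ)) 0 ≠ 0
    simpa [Real.fourier_eq, integral_complex_ofReal] using b.integral_pos.ne'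

theorem hasSum_fourier_mul {ι : Type*} [Countable ι] {c : ι → ℂ} {μ : ι → V} {f : V → ℂ}
    (hc : Summable fun i ↦ ‖c i‖) (hf : ∀ v, HasSum (fun i ↦ 𝐞 ⟪v, μ i⟫ • c i) (f v))
    {φ : V → ℂ} (hφ : Integrable φ) (w : V) :
    HasSum (fun i ↦ c i * 𝓕 φ (w - μ i)) (𝓕 (fun v ↦ f v * φ v) w) := by
  have hint (i : ι) : Integrable fun v ↦ c i * (𝐞 (-⟪v, w - μ i⟫) • φ v) :=
    ((Real.fourierIntegral_convergent_iff _).2 hφ).const_mul _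
  have hsum : Summable fun i ↦ ∫ v, ‖c i * (𝐞 (-⟪v, w - μ i⟫) • φ v)‖ := by
    simp only [norm_mul, Circle.norm_smul, integral_const_mul]
    exact hc.mul_right _
  convert! hasSum_integral_of_summable_integral_norm hint hsum using 1
  · ext i
    rw [integral_const_mul, Real.fourier_eq]
  · rw [Real.fourier_eq]
    refine integral_congr_ae (.of_forall fun v ↦ ?_)
    have hchar (i : ι) : c i * (𝐞 (-⟪v, w - μ i⟫) • φ v) =
        𝐞 ⟪v, μ i⟫ • c i * (𝐞 (-⟪v, w⟫) • φ v) := by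
      rw [inner_sub_right, neg_sub, sub_eq_add_neg, AddChar.map_add_eq_mul]
      simp only [Circle.smul_def, Circle.coe_mul, smul_eq_mul]
      ring
    simp only [hchar]
    rw [((hf v).mul_right _).tsum_eq, mul_smul_comm]

end Fourier

section Coefficients

variable {V ι : Type*} [NormedAddCommGroup V] [InnerProductSpace ℝ V]

theorem isBigO_coeff_of_holderOnWith [FiniteDimensional ℝ V] [Countable ι] {c : ι → ℂ} {μ : ι → V}
    {f : V → ℂ} (hc : Summable fun i ↦ ‖c i‖)
    (hf : ∀ v, HasSum (fun i ↦ 𝐞 ⟪v, μ i⟫ • c i) (f v)) {κ : ℝ} (hκ : 0 < κ)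
    (hsep : ∀ i j, i ≠ j → ‖μ i‖ ^ κ ≤ ‖μ i - μ j‖) {l : Filter ι}
    (hμ : Tendsto μ l (cobounded V)) {x₀ : V} {R : ℝ} (hR : 0 < R) {C s : ℝ≥0} (hs : s ≤ 1)
    (hholder : HolderOnWith C s f (ball x₀ R)) :
    c =O[l] fun i ↦ ‖μ i‖ ^ (-s : ℝ) := by
  borelize V
  obtain ⟨φ, hφ_supp, hφ_zero⟩ := exists_schwartzMap_support_subset_ball x₀ (half_pos hR)
  have hf_le (v : V) : ‖f v‖ ≤ (∑' i, ‖c i‖).toNNReal :=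
    ((hf v).norm_le_of_bounded hc.hasSum fun i ↦ (Circle.norm_smul _ _).le).trans
      (Real.le_coe_toNNReal _)
  have htotal : (fun i ↦ 𝓕 (fun v ↦ f v * φ v) (μ i)) =O[l] fun i ↦ ‖μ i‖ ^ (-s : ℝ) :=
    (isBigO_fourier_mul_schwartzMap (continuous_of_hasSum_char hc hf) hf_le (half_lt_self hR) hs
      hholder φ hφ_supp).comp_tendsto hμ
  have hoffdiag : (fun i ↦ 𝓕 (fun v ↦ f v * φ v) (μ i) - c i * 𝓕 (φ : V → ℂ) 0) =O[l]
      fun i ↦ ‖μ i‖ ^ (-s : ℝ) := by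
    have hφ_decay := (𝓕 φ).isBigO_cocompact_rpow (-(s / κ))
    rw [← cobounded_eq_cocompact, SchwartzMap.fourier_coe] at hφ_decay
    simpa only [smul_eq_mul] using isBigO_hasSum_sub_diagonal hc hκ s.coe_nonneg hφ_decay hμ hsep
      fun i ↦ hasSum_fourier_mul hc hf φ.integrable (μ i)
  have hdiag := htotal.sub hoffdiag
  simp only [sub_sub_cancel, mul_comm (c _)] at hdiag
  exact (isBigO_const_mul_left_iff hφ_zero).1 hdiag

variable {a : ι → ℝ} {ν : ι → V}

theorem summable_norm_sumElim_div_two (ha : Summable fun i ↦ |a i|) :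
    Summable fun i : ι ⊕ ι ↦ ‖((Sum.elim a a i / 2 : ℝ) : ℂ)‖ := by
  refine .sum _ ?_ ?_ <;> simpa [Function.comp_def] using ha.div_const 2

theorem hasSum_char_of_hasSum_cos (ha : Summable fun i ↦ |a i|) {v : V} {S : ℝ}
    (hS : HasSum (fun i ↦ a i * Real.cos (2 * Real.pi * ⟪v, ν i⟫)) S) :
    HasSum (fun i : ι ⊕ ι ↦ 𝐞 ⟪v, Sum.elim ν (-ν) i⟫ • ((Sum.elim a a i / 2 : ℝ) : ℂ)) S := by
  have hsummable : Summable fun i : ι ⊕ ι ↦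
      𝐞 ⟪v, Sum.elim ν (-ν) i⟫ • ((Sum.elim a a i / 2 : ℝ) : ℂ) := by
    refine .of_norm ?_
    simpa only [Circle.norm_smul] using summable_norm_sumElim_div_two ha
  have hinl := (hsummable.comp_injective Sum.inl_injective).hasSum
  have hinr := (hsummable.comp_injective Sum.inr_injective).hasSum
  have hpair (i : ι) : 𝐞 ⟪v, ν i⟫ • ((a i / 2 : ℝ) : ℂ) + 𝐞 ⟪v, -ν i⟫ • ((a i / 2 : ℝ) : ℂ) =
      ((a i * Real.cos (2 * Real.pi * ⟪v, ν i⟫) : ℝ) : ℂ) := by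
    simp only [inner_neg_right, Circle.smul_def, Real.fourierChar_apply, smul_eq_mul, mul_neg]
    push_cast
    rw [Complex.cos]
    ring_nf
  have hvalue := (hinl.add hinr).unique ((Complex.hasSum_ofReal.2 hS).congr_fun hpair)
  exact hvalue ▸ hinl.sum hinr

theorem isBigO_coeff_cos_of_holderOnWith [FiniteDimensional ℝ V] [Countable ι]
    (ha : Summable fun i ↦ |a i|) {f : V → ℝ}
    (hf : ∀ v, HasSum (fun i ↦ a i * Real.cos (2 * Real.pi * ⟪v, ν i⟫)) (f v)) {κ : ℝ}
    (hκ : 0 < κ) (hsub : ∀ i j, i ≠ j → ‖ν i‖ ^ κ ≤ ‖ν i - ν j‖)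
    (hadd : ∀ i j, ‖ν i‖ ^ κ ≤ ‖ν i + ν j‖) {l : Filter ι} (hν : Tendsto ν l (cobounded V))
    {x₀ : V} {R : ℝ} (hR : 0 < R) {C s : ℝ≥0} (hs : s ≤ 1)
    (hholder : HolderOnWith C s f (ball x₀ R)) :
    a =O[l] fun i ↦ ‖ν i‖ ^ (-s : ℝ) := by
  have hsep (i j : ι ⊕ ι) (hij : i ≠ j) :
      ‖Sum.elim ν (-ν) i‖ ^ κ ≤ ‖Sum.elim ν (-ν) i - Sum.elim ν (-ν) j‖ := by
    rcases i with i | i <;> rcases j with j | j <;>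
      simp only [Sum.elim_inl, Sum.elim_inr, Pi.neg_apply, norm_neg, sub_neg_eq_add]
    · exact hsub i j (ne_of_apply_ne _ hij)
    · exact hadd i j
    · rw [← neg_add', norm_neg]
      exact hadd i j
    · rw [neg_add_eq_sub, norm_sub_rev]
      exact hsub i j (ne_of_apply_ne _ hij)
  have hfreq : Tendsto (Sum.elim ν (-ν)) (l.map Sum.inl) (cobounded V) := tendsto_map'_iff.2 hν
  have hcomplex : HolderOnWith C s (fun v ↦ (f v : ℂ)) (ball x₀ R) := fun x hx y hy ↦
    (Complex.isometry_ofReal.edist_eq _ _).trans_le (hholder x hx y hy)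
  have hhalf : (fun i ↦ ((a i / 2 : ℝ) : ℂ)) =O[l] fun i ↦ ‖ν i‖ ^ (-s : ℝ) :=
    isBigO_map.1 <| isBigO_coeff_of_holderOnWith (summable_norm_sumElim_div_two ha)
      (fun v ↦ hasSum_char_of_hasSum_cos ha (hf v)) hκ hsep hfreq hR hs hcomplex
  exact ((Complex.isBigO_ofReal_left.1 hhalf).const_mul_left 2).congr_left fun i ↦
    mul_div_cancel₀ (a i) two_ne_zero

end Coefficients

theorem rpow_sub_one_le_rpow_sub_rpow {β x y : ℝ} (hβ : 1 ≤ β) (hy : 0 < y) (hxy : y + 1 ≤ x) :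
    x ^ (β - 1) ≤ x ^ β - y ^ β := by
  have hx : 0 < x := by linarith
  calc x ^ (β - 1) ≤ x ^ (β - 1) * (x - y) := le_mul_of_one_le_right (by positivity) (by linarith)
    _ = x ^ β - x ^ (β - 1) * y := by rw [mul_sub, ← Real.rpow_add_one hx.ne', sub_add_cancel]
    _ ≤ x ^ β - y ^ (β - 1) * y := by gcongr; linarith
    _ = x ^ β - y ^ β := by rw [← Real.rpow_add_one hy.ne', sub_add_cancel]

theorem natCast_rpow_sub_one_le_abs_rpow_sub_rpow {β : ℝ} (hβ : 1 ≤ β) {m n : ℕ} (hm : m ≠ 0)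
    (hn : n ≠ 0) (hmn : m ≠ n) : (m : ℝ) ^ (β - 1) ≤ |(m : ℝ) ^ β - (n : ℝ) ^ β| := by
  have hm_pos : (0 : ℝ) < m := by positivity
  have hn_pos : (0 : ℝ) < n := by positivity
  rcases hmn.lt_or_gt with hlt | hlt
  · rw [abs_sub_comm]
    calc (m : ℝ) ^ (β - 1) ≤ (n : ℝ) ^ (β - 1) := by gcongr
      _ ≤ (n : ℝ) ^ β - (m : ℝ) ^ β :=
        rpow_sub_one_le_rpow_sub_rpow hβ hm_pos (by exact_mod_cast hlt)
      _ ≤ _ := le_abs_self _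
  · exact (rpow_sub_one_le_rpow_sub_rpow hβ hn_pos (by exact_mod_cast hlt)).trans (le_abs_self _)

theorem tendsto_natCast_val_cofinite_atTop (A : Set ℕ) :
    Tendsto (fun n : A ↦ ((n : ℕ) : ℝ)) cofinite atTop :=
  tendsto_natCast_atTop_atTop.comp <|
    Nat.cofinite_eq_atTop ▸ Subtype.val_injective.tendsto_cofinite

theorem le_of_isBigO_rpow {ι : Type*} {l : Filter ι} [l.NeBot] {x : ι → ℝ}
    (hx : Tendsto x l atTop) {a b : ℝ} (h : (fun i ↦ x i ^ a) =O[l] fun i ↦ x i ^ b) : a ≤ b := by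
  by_contra! hba
  have hquot : Tendsto (fun i ↦ ‖x i ^ a / x i ^ b‖) l atTop := by
    refine (tendsto_norm_atTop_atTop.comp
      ((tendsto_rpow_atTop (sub_pos.2 hba)).comp hx)).congr' ?_
    filter_upwards [hx.eventually_gt_atTop 0] with i hi
    rw [Function.comp_apply, Function.comp_apply, Real.rpow_sub hi]
  exact not_isBoundedUnder_of_tendsto_atTop hquot (div_isBoundedUnder_of_isBigO h)

theorem isBigO_coeff_of_holderOnWith_rpow_frequencies {A : Set ℕ} (hA : 0 ∉ A) {a : A → ℝ}
    (ha : Summable fun n ↦ |a n|) {β : ℝ} (hβ : 1 < β) {f : ℝ → ℝ}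
    (hf : ∀ t, HasSum (fun n : A ↦ a n * Real.cos (2 * Real.pi * ((n : ℕ) : ℝ) ^ β * t)) (f t))
    {t₀ R : ℝ} (hR : 0 < R) {C s : ℝ≥0} (hs : s ≤ 1) (hholder : HolderOnWith C s f (ball t₀ R)) :
    a =O[cofinite] fun n ↦ ((n : ℕ) : ℝ) ^ (-(β * s)) := by
  have hβ_pos : 0 < β := zero_lt_one.trans hβ
  have hne (n : A) : (n : ℕ) ≠ 0 := ne_of_mem_of_not_mem n.2 hA
  have hnorm (n : A) : ‖((n : ℕ) : ℝ) ^ β‖ = ((n : ℕ) : ℝ) ^ β :=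
    Real.norm_of_nonneg (by positivity)
  have hfreq (n : A) : ‖((n : ℕ) : ℝ) ^ β‖ ^ ((β - 1) / β) = ((n : ℕ) : ℝ) ^ (β - 1) := by
    rw [hnorm, ← Real.rpow_mul (by positivity), mul_div_cancel₀ _ hβ_pos.ne']
  have hcobounded : Tendsto (fun n : A ↦ ((n : ℕ) : ℝ) ^ β) cofinite (cobounded ℝ) := by
    rw [← tendsto_norm_atTop_iff_cobounded]
    simp only [hnorm]
    exact (tendsto_rpow_atTop hβ_pos).comp (tendsto_natCast_val_cofinite_atTop A)
  refine (isBigO_coeff_cos_of_holderOnWith (ν := fun n : A ↦ ((n : ℕ) : ℝ) ^ β) ha (fun t ↦ ?_)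
    (div_pos (sub_pos.2 hβ) hβ_pos) (fun m n hmn ↦ ?_) (fun m n ↦ ?_) hcobounded hR hs
    hholder).congr_right fun n ↦ ?_
  · simpa only [Real.inner_apply, mul_comm t, mul_assoc] using hf t
  · rw [hfreq]
    exact natCast_rpow_sub_one_le_abs_rpow_sub_rpow hβ.le (hne m) (hne n)
      (Subtype.coe_injective.ne hmn)
  · rw [hfreq, Real.norm_of_nonneg (by positivity)]
    have hm_one : (1 : ℝ) ≤ (m : ℕ) := mod_cast Nat.one_le_iff_ne_zero.2 (hne m)
    calc ((m : ℕ) : ℝ) ^ (β - 1) ≤ ((m : ℕ) : ℝ) ^ β := by gcongr; exact sub_le_self _ zero_le_one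
      _ ≤ _ := le_add_of_nonneg_right (by positivity)
  · rw [hnorm, ← Real.rpow_mul (by positivity), mul_neg]

theorem prime_power_cos_series_holder_exponent_le_general {A : Set ℕ} (hA : A.Infinite)
    (hA₀ : 0 ∉ A) {α β : ℝ} (hβ : 0 < β) (hα : 1 < α) (t₀ : ℝ) {s : ℝ} (hs : s ≤ 1)
    (hholder : ∃ ε > (0 : ℝ), ∃ C > (0 : ℝ), ∀ x y : ℝ, |x - t₀| < ε → |y - t₀| < ε →
      |(∑' n : A, ((n : ℕ) : ℝ) ^ (-α) * Real.cos (2 * Real.pi * ((n : ℕ) : ℝ) ^ β * x)) -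
        (∑' n : A, ((n : ℕ) : ℝ) ^ (-α) * Real.cos (2 * Real.pi * ((n : ℕ) : ℝ) ^ β * y))| ≤
        C * |x - y| ^ s) :
    s ≤ α / β := by
  by_contra! hαs
  obtain ⟨ε, hε, C, hC, hdist⟩ := hholder
  lift s to ℝ≥0 using (by positivity : 0 ≤ α / β).trans hαs.le
  have hα_lt : α < β * s := (div_lt_iff₀' hβ).1 hαs
  have hβ_gt : 1 < β := hα.trans (hα_lt.trans_le (mul_le_of_le_one_right hβ.le hs))
  have hsummable : Summable fun n : A ↦ |((n : ℕ) : ℝ) ^ (-α)| :=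
    (Real.summable_nat_rpow.2 (neg_lt_neg hα)).abs.subtype A
  have hsum (t : ℝ) : Summable fun n : A ↦
      ((n : ℕ) : ℝ) ^ (-α) * Real.cos (2 * Real.pi * ((n : ℕ) : ℝ) ^ β * t) :=
    .of_norm_bounded hsummable fun n ↦ by
      rw [norm_mul]
      exact mul_le_of_le_one_right (norm_nonneg _) (Real.abs_cos_le_one _)
  have hbigO := isBigO_coeff_of_holderOnWith_rpow_frequencies hA₀ hsummable hβ_gt
    (fun t ↦ (hsum t).hasSum) hε (NNReal.coe_le_one.1 hs) <|
      holderOnWith_of_dist_le (C := C.toNNReal) fun x hx y hy ↦ by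
        rw [Real.coe_toNNReal C hC.le]
        exact hdist x y hx hy
  have hA_infinite : Infinite A := hA.to_subtype
  have hexponents : -α ≤ -(β * s) := le_of_isBigO_rpow (tendsto_natCast_val_cofinite_atTop A) hbigO
  linarith

/-- For `β > 0` and `1 < α ≤ β + 1`, every local Hölder exponent of
`V_{α,β}(t) = ∑_{p prime} p^{-α} cos(2π p^β t)` at any point `t₀` is at most `α/β`. -/
theorem prime_power_cos_series_holder_exponent_le (α β : ℝ) (hβ : 0 < β) (hα : 1 < α)
    (hαβ : α ≤ β + 1) (t₀ : ℝ) (s : ℝ) (hs : s ∈ Set.Ioc (0 : ℝ) 1)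
    (hholder : ∃ ε > (0 : ℝ), ∃ C > (0 : ℝ), ∀ x y : ℝ, |x - t₀| < ε → |y - t₀| < ε →
      |(∑' p : Nat.Primes,
          ((p : ℕ) : ℝ) ^ (-α) * Real.cos (2 * Real.pi * ((p : ℕ) : ℝ) ^ β * x)) -
        (∑' p : Nat.Primes,
          ((p : ℕ) : ℝ) ^ (-α) * Real.cos (2 * Real.pi * ((p : ℕ) : ℝ) ^ β * y))| ≤
        C * |x - y| ^ s) :
    s ≤ α / β :=
  prime_power_cos_series_holder_exponent_le_general Nat.infinite_setOfPred_prime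
    Nat.not_prime_zero hβ hα t₀ hs.2 hholder
end

section
/- Let q be a prime number and define V_{1,1}(n, 1/q) = ∑_{p ≤ n, p prime} (1/p)·cos(2π p/q). Then V_{1,1}(n, 1/q) / (ln ln n) tends to −1/(q−1) as n → ∞. -/
/-!
Restricted to a unit class `a` modulo `q`, the von Mangoldt function `Λ` has a Dirichlet series
which is `φ(q)⁻¹ / (s - 1)` plus a function continuous up to `s = 1` (the analytic input to
Dirichlet's theorem). Dividing the coefficients by `log n` integrates the pole, so the new series
is asymptotic to `φ(q)⁻¹ log δ⁻¹` at `s = 1 + δ`. Comparing `n⁻¹` with `n ^ (-(1 + K / log N))`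
below and above the cutoff `N` turns this into `∑ 1 / p ~ φ(q)⁻¹ log log N` over the primes
`p ≤ N` in the class `a`. The non-unit classes contain finitely many primes, and the cosines
summed over the unit classes form the Ramanujan sum `∑_{(a, q) = 1} exp (2πia / q) = μ(q)`.
-/

open Filter

open Topology Asymptotics Finset

section Tauberian

variable {f : ℕ → ℝ} {F : ℝ → ℝ} {c : ℝ}

theorem tendsto_log_log_natCast_atTop :
    Tendsto (fun N : ℕ ↦ Real.log (Real.log N)) atTop atTop :=
  Real.tendsto_log_atTop.comp (Real.tendsto_log_atTop.comp tendsto_natCast_atTop_atTop)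

theorem tendsto_sum_div_log_log_of_summable (hf : Summable f) :
    Tendsto (fun N : ℕ ↦ (∑ n ∈ range (N + 1), f n) / Real.log (Real.log N)) atTop (𝓝 0) :=
  (hf.tendsto_sum_tsum_nat.comp (tendsto_add_atTop_nat 1)).div_atTop tendsto_log_log_natCast_atTop

theorem rpow_div_log_eq_exp {x y : ℝ} (hx : 0 < x) (K : ℝ) :
    x ^ (K / Real.log y) = Real.exp (K * (Real.log x / Real.log y)) := by
  rw [Real.rpow_def_of_pos hx, mul_div_left_comm]

theorem div_le_exp_mul_div_rpow {a K : ℝ} (ha : 0 ≤ a) (hK : 0 ≤ K) {n N : ℕ} (hN : 1 < N)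
    (hnN : n ≤ N) :
    a / n ≤ Real.exp K * (a / (n : ℝ) ^ (1 + K / Real.log N)) := by
  have hlogN : 0 < Real.log N := Real.log_pos (mod_cast hN)
  rcases n.eq_zero_or_pos with rfl | hn
  · simp [Real.zero_rpow (by positivity : 1 + K / Real.log N ≠ 0)]
  have hn' : (0 : ℝ) < n := mod_cast hn
  have hratio : Real.log n / Real.log N ≤ 1 := (div_le_one hlogN).2 (by gcongr)
  rw [Real.rpow_add hn', Real.rpow_one, rpow_div_log_eq_exp hn', ← div_div, mul_div_assoc',
    le_div_iff₀ (Real.exp_pos _), mul_comm]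
  gcongr
  exact mul_le_of_le_one_right hK hratio

theorem div_rpow_one_add_le_div {a δ : ℝ} (ha : 0 ≤ a) (hδ : 0 ≤ δ) (n : ℕ) :
    a / (n : ℝ) ^ (1 + δ) ≤ a / n := by
  rcases n.eq_zero_or_pos with rfl | hn
  · simp [Real.zero_rpow (by positivity : 1 + δ ≠ 0)]
  have hn' : (1 : ℝ) ≤ n := mod_cast hn
  gcongr
  exact Real.self_le_rpow_of_one_le hn' (by linarith)

theorem div_rpow_two_mul_le_exp_neg_mul {a K : ℝ} (ha : 0 ≤ a) (hK : 0 ≤ K) {n N : ℕ} (hN : 1 < N)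
    (hNn : N ≤ n) :
    a / (n : ℝ) ^ (1 + 2 * K / Real.log N) ≤
      Real.exp (-K) * (a / (n : ℝ) ^ (1 + K / Real.log N)) := by
  have hlogN : 0 < Real.log N := Real.log_pos (mod_cast hN)
  have hn : (0 : ℝ) < n := mod_cast (by lia : 0 < n)
  have hratio : 1 ≤ Real.log n / Real.log N := (one_le_div hlogN).2 (by gcongr)
  have hsplit : 1 + 2 * K / Real.log N = (1 + K / Real.log N) + K / Real.log N := by ring
  rw [hsplit, Real.rpow_add hn _ (K / Real.log N), ← div_div, Real.exp_neg, ← div_eq_inv_mul,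
    rpow_div_log_eq_exp hn]
  gcongr
  exact le_mul_of_one_le_right hK hratio

theorem sum_range_div_le_exp_mul (hf : ∀ n, 0 ≤ f n)
    (hF : ∀ δ > 0, HasSum (fun n : ℕ ↦ f n / (n : ℝ) ^ (1 + δ)) (F δ)) {K : ℝ} (hK : 0 < K)
    {N : ℕ} (hN : 1 < N) :
    ∑ n ∈ range (N + 1), f n / n ≤ Real.exp K * F (K / Real.log N) := by
  have hlogN : 0 < Real.log N := Real.log_pos (mod_cast hN)
  calc ∑ n ∈ range (N + 1), f n / n
    _ ≤ ∑ n ∈ range (N + 1), Real.exp K * (f n / (n : ℝ) ^ (1 + K / Real.log N)) :=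
        sum_le_sum fun n hn ↦
          div_le_exp_mul_div_rpow (hf n) hK.le hN (mem_range_succ_iff.1 hn)
    _ ≤ Real.exp K * F (K / Real.log N) := by
        rw [← mul_sum]
        gcongr
        exact sum_le_hasSum _ (fun n _ ↦ div_nonneg (hf n) (by positivity)) (hF _ (by positivity))

theorem sub_exp_neg_mul_le_sum_range_div (hf : ∀ n, 0 ≤ f n)
    (hF : ∀ δ > 0, HasSum (fun n : ℕ ↦ f n / (n : ℝ) ^ (1 + δ)) (F δ)) {K : ℝ} (hK : 0 < K)
    {N : ℕ} (hN : 1 < N) :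
    F (2 * K / Real.log N) - Real.exp (-K) * F (K / Real.log N) ≤
      ∑ n ∈ range (N + 1), f n / n := by
  have hlogN : 0 < Real.log N := Real.log_pos (mod_cast hN)
  -- Each term with `n ≥ N` loses a factor `exp (-K)` when `δ = K / log N` doubles, so the tail of
  -- the left-hand series is nonpositive.
  have htail := sum_le_hasSum (range (N + 1))
    (fun n hn ↦ sub_nonneg.2 <| div_rpow_two_mul_le_exp_neg_mul (hf n) hK.le hN
      (by simp only [mem_range] at hn; lia))
    (((hF (K / Real.log N) (by positivity)).mul_left (Real.exp (-K))).sub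
      (hF (2 * K / Real.log N) (by positivity)))
  have hhead : ∀ n ∈ range (N + 1), f n / (n : ℝ) ^ (1 + 2 * K / Real.log N) -
      Real.exp (-K) * (f n / (n : ℝ) ^ (1 + K / Real.log N)) ≤ f n / n := fun n _ ↦
    (sub_le_self _ (mul_nonneg (by positivity) (div_nonneg (hf n) (by positivity)))).trans
      (div_rpow_one_add_le_div (hf n) (by positivity) n)
  have hsum := sum_le_sum hhead
  simp only [sum_sub_distrib] at htail hsum
  linarith

theorem tendsto_comp_const_div_log_div_log_log
    (hF : Tendsto (fun δ ↦ F δ / Real.log δ⁻¹) (𝓝[>] 0) (𝓝 c)) {K : ℝ} (hK : 0 < K) :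
    Tendsto (fun N : ℕ ↦ F (K / Real.log N) / Real.log (Real.log N)) atTop (𝓝 c) := by
  have hlog : Tendsto (fun N : ℕ ↦ Real.log N) atTop atTop :=
    Real.tendsto_log_atTop.comp tendsto_natCast_atTop_atTop
  have hδ : Tendsto (fun N : ℕ ↦ K / Real.log N) atTop (𝓝[>] 0) :=
    tendsto_nhdsWithin_iff.2 ⟨hlog.const_div_atTop K, by
      filter_upwards [hlog.eventually_gt_atTop 0] with N hN using div_pos hK hN⟩
  have hratio : Tendsto (fun N : ℕ ↦ 1 - Real.log K / Real.log (Real.log N)) atTop (𝓝 1) := by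
    simpa using (tendsto_log_log_natCast_atTop.const_div_atTop (Real.log K)).const_sub 1
  have hprod := (hF.comp hδ).mul hratio
  rw [mul_one] at hprod
  refine hprod.congr' ?_
  filter_upwards [hlog.eventually_gt_atTop 0, hlog.eventually_gt_atTop K,
    tendsto_log_log_natCast_atTop.eventually_gt_atTop 0] with N hN hKN hloglog
  have hne : Real.log (Real.log N) - Real.log K ≠ 0 :=
    (sub_pos.2 (Real.log_lt_log hK hKN)).ne'
  simp only [Function.comp_apply, inv_div, Real.log_div hN.ne' hK.ne']
  field_simp

theorem tendsto_sum_div_log_log_of_tendsto_div_log_inv (hf : ∀ n, 0 ≤ f n)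
    (hF : ∀ δ > 0, HasSum (fun n : ℕ ↦ f n / (n : ℝ) ^ (1 + δ)) (F δ))
    (hc : Tendsto (fun δ ↦ F δ / Real.log δ⁻¹) (𝓝[>] 0) (𝓝 c)) :
    Tendsto (fun N : ℕ ↦ (∑ n ∈ range (N + 1), f n / n) / Real.log (Real.log N)) atTop (𝓝 c) := by
  have hloglog := tendsto_log_log_natCast_atTop.eventually_gt_atTop 0
  refine tendsto_order.2 ⟨fun b hb ↦ ?_, fun b hb ↦ ?_⟩
  · obtain ⟨K, hbK, hK⟩ : ∃ K : ℝ, b < c - Real.exp (-K) * c ∧ 0 < K := by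
      have hlim : Tendsto (fun K ↦ c - Real.exp (-K) * c) atTop (𝓝 c) := by
        simpa using (Real.tendsto_exp_neg_atTop_nhds_zero.mul_const c).const_sub c
      exact ((hlim.eventually_const_lt hb).and (eventually_gt_atTop 0)).exists
    have hlower := (tendsto_comp_const_div_log_div_log_log hc (mul_pos two_pos hK)).sub
      ((tendsto_comp_const_div_log_div_log_log hc hK).const_mul (Real.exp (-K)))
    filter_upwards [hlower.eventually_const_lt hbK, hloglog, eventually_gt_atTop 1]
      with N hbN hpos hN
    rw [← mul_div_assoc, ← sub_div] at hbN
    exact hbN.trans_le (by gcongr; exact sub_exp_neg_mul_le_sum_range_div hf hF hK hN)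
  · obtain ⟨K, hKb, hK⟩ : ∃ K : ℝ, Real.exp K * c < b ∧ 0 < K := by
      have hlim : Tendsto (fun K ↦ Real.exp K * c) (𝓝[>] 0) (𝓝 c) := by
        simpa using ((Real.continuous_exp.tendsto 0).mul_const c).mono_left nhdsWithin_le_nhds
      exact ((hlim.eventually_lt_const hb).and self_mem_nhdsWithin).exists
    have hupper := (tendsto_comp_const_div_log_div_log_log hc hK).const_mul (Real.exp K)
    filter_upwards [hupper.eventually_lt_const hKb, hloglog, eventually_gt_atTop 1]
      with N hbN hpos hN
    rw [← mul_div_assoc] at hbN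
    exact lt_of_le_of_lt (by gcongr; exact sum_range_div_le_exp_mul hf hF hK hN) hbN

end Tauberian

theorem isBigO_one_nhdsGT_of_hasDerivAt {E : Type*} [NormedAddCommGroup E] [NormedSpace ℝ E]
    {G G' : ℝ → E} {a : ℝ} (hG : ∀ x > a, HasDerivAt G (G' x) x)
    (hG' : G' =O[𝓝[>] a] (1 : ℝ → ℝ)) : G =O[𝓝[>] a] (1 : ℝ → ℝ) := by
  obtain ⟨C, hC⟩ := hG'.bound
  obtain ⟨b, hab, hb⟩ := mem_nhdsGT_iff_exists_Ioc_subset.1 hC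
  have hbound : ∀ x ∈ Set.Ioc a b, ‖G' x‖ ≤ C := fun x hx ↦ by simpa using hb hx
  have hC0 : 0 ≤ C := (norm_nonneg _).trans (hbound b ⟨hab, le_rfl⟩)
  refine .of_bound (C * (b - a) + ‖G b‖) ?_
  filter_upwards [Ioc_mem_nhdsGT hab] with x hx
  have hmv : ‖G x - G b‖ ≤ C * ‖x - b‖ :=
    (convex_Ioc a b).norm_image_sub_le_of_norm_hasDerivWithin_le
      (fun y hy ↦ (hG y hy.1).hasDerivWithinAt) hbound ⟨hab, le_rfl⟩ hx
  have hdist : ‖x - b‖ ≤ b - a := by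
    rw [Real.norm_eq_abs, abs_le]
    constructor <;> linarith [hx.1, hx.2]
  calc ‖G x‖
    _ ≤ ‖G x - G b‖ + ‖G b‖ := by simpa using norm_add_le (G x - G b) (G b)
    _ ≤ (C * (b - a) + ‖G b‖) * ‖(1 : ℝ → ℝ) x‖ := by
      simp only [Pi.one_apply, norm_one, mul_one]
      gcongr
      exact hmv.trans (by gcongr)

theorem tendsto_log_inv_nhdsGT_zero : Tendsto (fun δ : ℝ ↦ Real.log δ⁻¹) (𝓝[>] 0) atTop :=
  Real.tendsto_log_atTop.comp tendsto_inv_nhdsGT_zero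

theorem hasDerivAt_LSeries_add_log {f : ℕ → ℂ} {s : ℂ}
    (hf : LSeries.abscissaOfAbsConv f ≤ s.re) (c : ℂ) {δ : ℝ} (hδ : 0 < δ) :
    HasDerivAt (fun δ : ℝ ↦ LSeries f (s + δ) + c * Real.log δ)
      (-(LSeries (LSeries.logMul f) (s + δ) - c / δ)) δ := by
  have hs : LSeries.abscissaOfAbsConv f < (s + δ).re :=
    hf.trans_lt (by rw [Complex.add_re, Complex.ofReal_re]; exact_mod_cast lt_add_of_pos_right _ hδ)
  have hshift : HasDerivAt (fun z : ℂ ↦ LSeries f (s + z))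
      (-LSeries (LSeries.logMul f) (s + δ)) δ :=
    (LSeries_hasDerivAt hs).comp_const_add s (δ : ℂ)
  have hlog : HasDerivAt (fun δ : ℝ ↦ c * (Real.log δ : ℂ)) (c * ((δ⁻¹ : ℝ) : ℂ)) δ :=
    (Real.hasDerivAt_log hδ.ne').ofReal_comp.const_mul c
  convert! hshift.comp_ofReal.add hlog using 1
  push_cast
  ring

theorem tendsto_LSeries_div_log_inv {f : ℕ → ℂ} {s c : ℂ}
    (hf : LSeries.abscissaOfAbsConv f ≤ s.re)
    (hpole : (fun δ : ℝ ↦ LSeries (LSeries.logMul f) (s + δ) - c / δ) =O[𝓝[>] 0] (1 : ℝ → ℝ)) :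
    Tendsto (fun δ : ℝ ↦ LSeries f (s + δ) / Real.log δ⁻¹) (𝓝[>] 0) (𝓝 c) := by
  have hbounded : (fun δ : ℝ ↦ LSeries f (s + δ) + c * Real.log δ) =O[𝓝[>] 0] (1 : ℝ → ℝ) :=
    isBigO_one_nhdsGT_of_hasDerivAt (fun _ ↦ hasDerivAt_LSeries_add_log hf c) hpole.neg_left
  have hlittle : (fun δ : ℝ ↦ LSeries f (s + δ) + c * Real.log δ) =o[𝓝[>] 0]
      (fun δ : ℝ ↦ (Real.log δ⁻¹ : ℂ)) :=
    hbounded.trans_isLittleO <| (isLittleO_one_left_iff ℝ).2 <| by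
      simpa [Function.comp_def] using tendsto_abs_atTop_atTop.comp tendsto_log_inv_nhdsGT_zero
  have hlim := hlittle.tendsto_div_nhds_zero.add_const c
  rw [zero_add] at hlim
  refine hlim.congr' ?_
  filter_upwards [tendsto_log_inv_nhdsGT_zero.eventually_gt_atTop 0] with δ hδ
  have hne : (Real.log δ : ℂ) ≠ 0 := mod_cast (by simpa using hδ.ne' : Real.log δ ≠ 0)
  rw [Real.log_inv]
  push_cast
  field_simp
  ring

theorem hasSum_div_rpow_re_LSeries {f : ℕ → ℝ} {x : ℝ} (hx : x ≠ 0)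
    (hf : LSeriesSummable (fun n ↦ (f n : ℂ)) x) :
    HasSum (fun n : ℕ ↦ f n / (n : ℝ) ^ x) (LSeries (fun n ↦ (f n : ℂ)) x).re := by
  refine (Complex.hasSum_re hf.hasSum).congr_fun ?_
  intro n
  rcases eq_or_ne n 0 with rfl | hn
  · simp [Real.zero_rpow hx]
  · rw [LSeries.term_of_ne_zero hn, ← Complex.ofReal_natCast, ← Complex.ofReal_cpow n.cast_nonneg,
      ← Complex.ofReal_div, Complex.ofReal_re]

section PrimesInResidueClass

open ArithmeticFunction.vonMangoldt

/-- The weights `Λ(n) / log n` restricted to the residue class `a` modulo `q`. On primes this is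
the indicator function of the class; at `n = 0` and `n = 1` it takes the value `0 / 0 = 0`. -/
noncomputable def residueClassDivLog {q : ℕ} (a : ZMod q) (n : ℕ) : ℝ :=
  residueClass a n / Real.log n

variable {q : ℕ} (a : ZMod q)

theorem residueClassDivLog_nonneg (n : ℕ) : 0 ≤ residueClassDivLog a n :=
  div_nonneg (residueClass_nonneg a n) (Real.log_natCast_nonneg n)

theorem residueClassDivLog_le_one (n : ℕ) : residueClassDivLog a n ≤ 1 :=
  div_le_one_of_le₀ ((residueClass_le a n).trans ArithmeticFunction.vonMangoldt_le_log)
    (Real.log_natCast_nonneg n)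

theorem residueClassDivLog_apply_prime {p : ℕ} (hp : p.Prime) :
    residueClassDivLog a p = if (p : ZMod q) = a then 1 else 0 := by
  have hlog : Real.log p ≠ 0 := (Real.log_pos (mod_cast hp.one_lt)).ne'
  simp [residueClassDivLog, Set.indicator_apply, ArithmeticFunction.vonMangoldt_apply_prime hp,
    ite_div, hlog]

theorem logMul_residueClassDivLog :
    LSeries.logMul (fun n ↦ (residueClassDivLog a n : ℂ)) = fun n ↦ (residueClass a n : ℂ) := by
  ext n
  rcases Nat.lt_or_ge 1 n with hn | hn
  · have hlog : (Real.log n : ℂ) ≠ 0 := mod_cast (Real.log_pos (mod_cast hn)).ne'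
    rw [LSeries.logMul, residueClassDivLog, Complex.ofReal_div, ← Complex.natCast_log,
      mul_div_cancel₀ _ hlog]
  · interval_cases n <;> simp [LSeries.logMul, residueClassDivLog, Set.indicator_apply]

theorem abscissaOfAbsConv_residueClassDivLog_le_one :
    LSeries.abscissaOfAbsConv (fun n ↦ (residueClassDivLog a n : ℂ)) ≤ 1 := by
  refine LSeries.abscissaOfAbsConv_le_of_le_const ⟨1, fun n _ ↦ ?_⟩
  rw [Complex.norm_of_nonneg (residueClassDivLog_nonneg a n)]
  exact residueClassDivLog_le_one a n

theorem hasSum_residueClassDivLog_div_rpow {δ : ℝ} (hδ : 0 < δ) :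
    HasSum (fun n : ℕ ↦ residueClassDivLog a n / (n : ℝ) ^ (1 + δ))
      (LSeries (fun n ↦ (residueClassDivLog a n : ℂ)) (1 + δ)).re := by
  have hsummable : LSeriesSummable (fun n ↦ (residueClassDivLog a n : ℂ)) (1 + δ : ℝ) :=
    LSeriesSummable_of_abscissaOfAbsConv_lt_re <|
      (abscissaOfAbsConv_residueClassDivLog_le_one a).trans_lt <| by
        rw [Complex.ofReal_re]
        exact_mod_cast lt_add_of_pos_right _ hδ
  simpa using hasSum_div_rpow_re_LSeries (by positivity) hsummable

variable {a}

theorem isBigO_LSeries_residueClass_sub_pole [NeZero q] (ha : IsUnit a) :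
    (fun δ : ℝ ↦ LSeries (fun n ↦ (residueClass a n : ℂ)) (1 + δ) - (q.totient : ℂ)⁻¹ / δ)
      =O[𝓝[>] 0] (1 : ℝ → ℝ) := by
  have hmaps : Set.MapsTo (fun δ : ℝ ↦ (1 + δ : ℂ)) (Set.Ici 0) {s | 1 ≤ s.re} := fun δ hδ ↦ by
    simpa using hδ
  have hcont : ContinuousWithinAt (fun δ : ℝ ↦ LFunctionResidueClassAux a (1 + δ)) (Set.Ici 0) 0 :=
    ((continuousOn_LFunctionResidueClassAux a).comp (by fun_prop) hmaps) 0 Set.self_mem_Ici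
  refine ((hcont.mono Set.Ioi_subset_Ici_self).tendsto.isBigO_one ℝ).congr' ?_ .rfl
  filter_upwards [self_mem_nhdsWithin] with δ hδ
  simpa using eqOn_LFunctionResidueClassAux ha (x := 1 + δ) (by simpa using hδ)

theorem tendsto_sum_residueClassDivLog_div_log_log [NeZero q] (ha : IsUnit a) :
    Tendsto (fun N : ℕ ↦
      (∑ n ∈ range (N + 1), residueClassDivLog a n / n) / Real.log (Real.log N))
      atTop (𝓝 (q.totient : ℝ)⁻¹) := by
  refine tendsto_sum_div_log_log_of_tendsto_div_log_inv (residueClassDivLog_nonneg a)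
    (fun δ hδ ↦ hasSum_residueClassDivLog_div_rpow a hδ) ?_
  have hpole := isBigO_LSeries_residueClass_sub_pole ha
  rw [← logMul_residueClassDivLog] at hpole
  have hlim := tendsto_LSeries_div_log_inv
    (by simpa using abscissaOfAbsConv_residueClassDivLog_le_one a) hpole
  have hre := (Complex.continuous_re.tendsto _).comp hlim
  simp only [Function.comp_def, Complex.div_ofReal_re] at hre
  rwa [← Complex.ofReal_natCast, ← Complex.ofReal_inv, Complex.ofReal_re] at hre

variable (a)

theorem summable_residueClassDivLog_div_not_prime :
    Summable fun n : ℕ ↦ if n.Prime then 0 else residueClassDivLog a n / n := by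
  refine summable_of_isBigO_nat (summable_residueClass_non_primes_div a) ?_
  refine .of_bound 1 ?_
  have hlog := (Real.tendsto_log_atTop.comp tendsto_natCast_atTop_atTop).eventually_ge_atTop 1
  filter_upwards [hlog] with n hn
  split_ifs with hp
  · simp
  · rw [residueClassDivLog, div_right_comm, norm_div, one_mul]
    exact div_le_self (norm_nonneg _) (hn.trans (Real.le_norm_self _))

variable {a}

theorem tendsto_sum_prime_eq_div_log_log_of_isUnit [NeZero q] (ha : IsUnit a) :
    Tendsto (fun N : ℕ ↦
      (∑ p ∈ range (N + 1) with Nat.Prime p ∧ ((p : ℕ) : ZMod q) = a, (1 : ℝ) / p) /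
        Real.log (Real.log N)) atTop (𝓝 (q.totient : ℝ)⁻¹) := by
  have hlim := (tendsto_sum_residueClassDivLog_div_log_log ha).sub
    (tendsto_sum_div_log_log_of_summable (summable_residueClassDivLog_div_not_prime a))
  rw [sub_zero] at hlim
  refine hlim.congr fun N ↦ ?_
  rw [← sub_div, ← sum_sub_distrib, sum_filter]
  congr 1
  refine sum_congr rfl fun n _ ↦ ?_
  by_cases hp : n.Prime
  · simp [hp, residueClassDivLog_apply_prime a hp, ite_div]
  · simp [hp]

theorem finite_setOf_prime_and_eq_of_not_isUnit [NeZero q] (ha : ¬ IsUnit a) :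
    {p : ℕ | p.Prime ∧ (p : ZMod q) = a}.Finite := by
  refine (Set.finite_Iic q).subset ?_
  rintro p ⟨hp, rfl⟩
  rw [ZMod.isUnit_iff_coprime, hp.coprime_iff_not_dvd, not_not] at ha
  exact Nat.le_of_dvd (NeZero.pos q) ha

theorem tendsto_sum_prime_eq_div_log_log_of_not_isUnit [NeZero q] (ha : ¬ IsUnit a) :
    Tendsto (fun N : ℕ ↦
      (∑ p ∈ range (N + 1) with Nat.Prime p ∧ ((p : ℕ) : ZMod q) = a, (1 : ℝ) / p) /
        Real.log (Real.log N)) atTop (𝓝 0) := by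
  simp only [sum_filter]
  refine tendsto_sum_div_log_log_of_summable (summable_of_hasFiniteSupport ?_)
  refine (finite_setOf_prime_and_eq_of_not_isUnit ha).subset fun p hp ↦ ?_
  by_contra h
  exact hp (if_neg h)

theorem tendsto_sum_prime_mul_div_log_log [NeZero q] (w : ZMod q → ℝ) :
    Tendsto (fun N : ℕ ↦ (∑ p ∈ range (N + 1) with p.Prime, 1 / p * w p) / Real.log (Real.log N))
      atTop (𝓝 ((∑ u : (ZMod q)ˣ, w u) / q.totient)) := by
  classical
  have hclass (a : ZMod q) : Tendsto (fun N : ℕ ↦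
      (∑ p ∈ range (N + 1) with Nat.Prime p ∧ ((p : ℕ) : ZMod q) = a, (1 : ℝ) / p) /
        Real.log (Real.log N)) atTop (𝓝 (if IsUnit a then (q.totient : ℝ)⁻¹ else 0)) := by
    split_ifs with ha
    · exact tendsto_sum_prime_eq_div_log_log_of_isUnit ha
    · exact tendsto_sum_prime_eq_div_log_log_of_not_isUnit ha
  have hlim := tendsto_finsetSum univ fun a _ ↦ (hclass a).mul_const (w a)
  have hvalue : ∑ a : ZMod q, (if IsUnit a then (q.totient : ℝ)⁻¹ else 0) * w a =
      (∑ u : (ZMod q)ˣ, w u) / q.totient := by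
    refine .trans ?_ (sum_div ..).symm
    refine (Fintype.sum_of_injective _ Units.val_injective _ _ (fun a ha ↦ ?_) fun u ↦ ?_).symm
    · rw [if_neg (show ¬ IsUnit a from ha), zero_mul]
    · rw [if_pos u.isUnit, div_eq_inv_mul]
  rw [hvalue] at hlim
  refine hlim.congr fun N ↦ ?_
  rw [← sum_fiberwise _ (fun p : ℕ ↦ (p : ZMod q)), sum_div]
  refine sum_congr rfl fun a _ ↦ ?_
  rw [div_mul_eq_mul_div, sum_mul, filter_filter]
  congr 1
  refine sum_congr rfl fun p hp ↦ ?_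
  rw [(mem_filter.1 hp).2.2]

end PrimesInResidueClass

section RamanujanSum

open ArithmeticFunction.Moebius

variable {R : Type*} [CommRing R] [IsDomain R] {ζ : R} {n : ℕ}

theorem sum_nthRootsFinset_of_isPrimitiveRoot (hζ : IsPrimitiveRoot ζ n) :
    ∑ z ∈ Polynomial.nthRootsFinset n (1 : R), z = if n = 1 then 1 else 0 := by
  classical
  have hgeom : ∑ z ∈ Polynomial.nthRootsFinset n (1 : R), z = ∑ i ∈ range n, ζ ^ i := by
    rw [Polynomial.nthRootsFinset_def, sum_eq_multiset_sum, Multiset.toFinset_val,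
      hζ.nthRoots_one_nodup.dedup, hζ.nthRoots_eq (one_pow n)]
    simp [sum_eq_multiset_sum]
  rw [hgeom]
  rcases lt_trichotomy n 1 with hn | rfl | hn
  · simp [Nat.lt_one_iff.1 hn]
  · simp
  · rw [hζ.geom_sum_eq_zero hn, if_neg hn.ne']

theorem sum_primitiveRoots_of_isPrimitiveRoot (hζ : IsPrimitiveRoot ζ n) :
    ∑ z ∈ primitiveRoots n R, z = (μ n : R) := by
  classical
  rcases n.eq_zero_or_pos with rfl | hn
  · simp
  have hdiv : ∀ m > 0, m ∈ {d | d ∣ n} →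
      ∑ d ∈ m.divisors, ∑ z ∈ primitiveRoots d R, z = if m = 1 then 1 else 0 := by
    intro m _ hmn
    rw [← sum_nthRootsFinset_of_isPrimitiveRoot (hζ.pow hn (Nat.div_mul_cancel hmn).symm),
      IsPrimitiveRoot.nthRoots_one_eq_biUnion_primitiveRoots,
      sum_biUnion fun _ _ _ _ hij ↦ IsPrimitiveRoot.disjoint hij]
  rw [← (ArithmeticFunction.sum_eq_iff_sum_mul_moebius_eq_on {d | d ∣ n}
    fun _ _ ↦ dvd_trans).1 hdiv n hn dvd_rfl,
    Nat.sum_divisorsAntidiagonal' fun d e ↦ (μ d : R) * if e = 1 then 1 else 0]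
  simp [hn.ne']

theorem sum_units_pow_val_of_isPrimitiveRoot [NeZero n] (hζ : IsPrimitiveRoot ζ n) :
    ∑ u : (ZMod n)ˣ, ζ ^ (u : ZMod n).val = (μ n : R) := by
  rw [← sum_primitiveRoots_of_isPrimitiveRoot hζ]
  refine sum_nbij (fun u : (ZMod n)ˣ ↦ ζ ^ (u : ZMod n).val) ?_ ?_ ?_ fun _ _ ↦ rfl
  · intro u _
    rw [mem_primitiveRoots (NeZero.pos n), hζ.pow_iff_coprime (NeZero.pos n)]
    exact ZMod.val_coe_unit_coprime u
  · intro u _ v _ huv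
    exact Units.ext <| ZMod.val_injective n <| hζ.pow_inj (ZMod.val_lt _) (ZMod.val_lt _) huv
  · intro z hz
    obtain ⟨i, hi, hcop, rfl⟩ :=
      hζ.isPrimitiveRoot_iff.1 (isPrimitiveRoot_of_mem_primitiveRoots hz)
    exact ⟨ZMod.unitOfCoprime i hcop, mem_coe.2 (mem_univ _), by simp [ZMod.val_cast_of_lt hi]⟩

theorem isPrimitiveRoot_stdAddChar_one (n : ℕ) [NeZero n] :
    IsPrimitiveRoot (ZMod.stdAddChar (1 : ZMod n)) n := by
  rw [← Int.cast_one, ZMod.stdAddChar_coe, Int.cast_one, mul_one]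
  exact Complex.isPrimitiveRoot_exp n (NeZero.ne n)

theorem sum_units_stdAddChar (n : ℕ) [NeZero n] :
    ∑ u : (ZMod n)ˣ, ZMod.stdAddChar (u : ZMod n) = (μ n : ℂ) := by
  rw [← sum_units_pow_val_of_isPrimitiveRoot (isPrimitiveRoot_stdAddChar_one n)]
  refine sum_congr rfl fun u _ ↦ ?_
  rw [← AddChar.map_nsmul_eq_pow, nsmul_one, ZMod.natCast_zmod_val]

theorem re_stdAddChar_natCast (n : ℕ) [NeZero n] (m : ℕ) :
    (ZMod.stdAddChar (m : ZMod n)).re = Real.cos (2 * Real.pi * m / n) := by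
  rw [← Int.cast_natCast, ZMod.stdAddChar_coe, ← Complex.exp_ofReal_mul_I_re]
  congr 2
  push_cast
  ring

end RamanujanSum

theorem prime_series_at_prime_reciprocal_asymptotic_general (q : ℕ) (hq : q ≠ 0) :
    Tendsto
      (fun n : ℕ =>
        (∑ p ∈ (Finset.range (n + 1)).filter Nat.Prime,
          (1 : ℝ) / p * Real.cos (2 * Real.pi * p / q)) / Real.log (Real.log n))
      atTop (nhds (ArithmeticFunction.moebius q / q.totient)) := by
  have : NeZero q := ⟨hq⟩
  have hsum : ∑ u : (ZMod q)ˣ, (ZMod.stdAddChar (u : ZMod q)).re =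
      ArithmeticFunction.moebius q := by
    rw [← Complex.re_sum, sum_units_stdAddChar, Complex.intCast_re]
  have hlim := tendsto_sum_prime_mul_div_log_log fun a : ZMod q ↦ (ZMod.stdAddChar a).re
  simp only [re_stdAddChar_natCast] at hlim
  rwa [hsum] at hlim

/-- For `q` prime, `V_{1,1}(n, 1/q) = ∑_{p ≤ n prime} (1/p) cos(2π p / q)` satisfies
`V_{1,1}(n, 1/q) / ln ln n → -1/(q-1)` as `n → ∞`. -/
theorem prime_series_at_prime_reciprocal_asymptotic (q : ℕ) (hq : q.Prime) :
    Tendsto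
      (fun n : ℕ =>
        (∑ p ∈ (Finset.range (n + 1)).filter Nat.Prime,
          (1 : ℝ) / p * Real.cos (2 * Real.pi * p / q)) / Real.log (Real.log n))
      atTop (nhds (-(1 / ((q : ℝ) - 1)))) := by
  simpa [ArithmeticFunction.moebius_apply_prime hq, Nat.totient_prime hq, hq.one_le, neg_div]
    using prime_series_at_prime_reciprocal_asymptotic_general q hq.ne_zero
end

section
/- Let α be a real number with α > 1 and let N ≥ 2. Then the tail of the prime zeta function satisfies ∑_{p > N, p prime} p^{−α} = ∑_{n=1}^∞ (μ(n)/n) · ln( ζ(nα) · ∏_{p ≤ N, p prime} (1 − p^{−nα}) ), where μ is the Möbius function and ζ(s) = ∑_{k=1}^∞ k^{−s} is the Riemann zeta function; in particular the series over n on the right-hand side converges. -/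
/-- The Riemann zeta function for real argument `s`, as `∑_{k=1}^∞ k^{-s}`. -/
noncomputable def realZeta (s : ℝ) : ℝ := ∑' k : ℕ+, ((k : ℕ) : ℝ) ^ (-s)

/-!
For a summable family `x` of reals with `|x i| < 1`, expanding the logarithms gives
`∑ n, μ n / n * ∑ i, -log (1 - x i ^ n) = ∑ i, ∑ k, (∑ d ∣ k, μ d) * x i ^ k / k`, and
`∑ d ∣ k, μ d` kills every term but `k = 1`, leaving `∑ i, x i`. For the family `x p = f p`, `f`
completely multiplicative and `p` prime, the inner sum over `p` on the left is the logarithm of the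
Euler product of `f ^ n`, with finitely many Euler factors removed.
-/

open Filter Topology
open scoped ArithmeticFunction.Moebius

lemma abs_moebius_div_natCast_le_one (n : ℕ) : |(μ n : ℝ) / n| ≤ 1 := by
  rcases n.eq_zero_or_pos with rfl | hn
  · simp
  · have hμ : |(μ n : ℝ)| ≤ 1 := mod_cast ArithmeticFunction.abs_moebius_le_one
    rw [abs_div, Nat.abs_cast]
    exact div_le_one_of_le₀ (hμ.trans (mod_cast hn)) n.cast_nonneg

lemma sum_divisors_moebius (n : ℕ) : ∑ d ∈ n.divisors, μ d = if n = 1 then 1 else 0 := by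
  rw [← ArithmeticFunction.coe_mul_zeta_apply, ArithmeticFunction.moebius_mul_coe_zeta,
    ArithmeticFunction.one_apply]

lemma tsum_tsum_mul_eq_tsum_sum_divisors {R : Type*} [NormedRing R] [CompleteSpace R]
    {a b : ℕ → R} (hab : Summable fun c : ℕ+ × ℕ+ ↦ a c.1 * b (c.1 * c.2)) :
    ∑' n : ℕ+, ∑' m : ℕ+, a n * b (n * m) =
      ∑' k : ℕ+, (∑ d ∈ (k : ℕ).divisors, a d) * b k := by
  have hsigma := sigmaAntidiagonalEquivProd.summable_iff.mpr hab
  simp only [Function.comp_def] at hsigma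
  rw [← hab.tsum_prod, ← sigmaAntidiagonalEquivProd.tsum_eq, hsigma.tsum_sigma]
  refine tsum_congr fun k ↦ ?_
  calc ∑' c : (k : ℕ).divisorsAntidiagonal, a c.1.1 * b (c.1.1 * c.1.2)
    _ = ∑ c ∈ (k : ℕ).divisorsAntidiagonal, a c.1 * b (c.1 * c.2) :=
      Finset.tsum_subtype _ fun c : ℕ × ℕ ↦ a c.1 * b (c.1 * c.2)
    _ = ∑ c ∈ (k : ℕ).divisorsAntidiagonal, a c.1 * b k :=
      Finset.sum_congr rfl fun c hc ↦ by rw [(Nat.mem_divisorsAntidiagonal.mp hc).1]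
    _ = (∑ d ∈ (k : ℕ).divisors, a d) * b k := by
      rw [Nat.sum_divisorsAntidiagonal fun d _ ↦ a d * b k, Finset.sum_mul]

lemma hasSum_pnat_pow_div_neg_log_one_sub {x : ℝ} (hx : |x| < 1) :
    HasSum (fun n : ℕ+ ↦ x ^ (n : ℕ) / (n : ℕ)) (-Real.log (1 - x)) := by
  rw [hasSum_pnat_iff_hasSum_succ (f := fun n : ℕ ↦ x ^ n / (n : ℝ))]
  exact_mod_cast Real.hasSum_pow_div_log_of_abs_lt_one hx

lemma tsum_moebius_div_mul_neg_log_one_sub_pow {x : ℝ} (hx : |x| < 1) :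
    ∑' n : ℕ+, (μ n : ℝ) / (n : ℕ) * -Real.log (1 - x ^ (n : ℕ)) = x := by
  let b : ℕ → ℝ := fun k ↦ x ^ k / k
  have mul_b_mul (n m : ℕ) :
      (μ n : ℝ) * b (n * m) = (μ n : ℝ) / n * ((x ^ n) ^ m / m) := by
    simp only [b, pow_mul, Nat.cast_mul]
    ring
  have hsum : Summable fun c : ℕ+ × ℕ+ ↦ (μ c.1 : ℝ) * b (c.1 * c.2) := by
    refine (summable_prod_mul_pow (𝕜 := ℝ) 0 hx).norm.of_norm_bounded fun ⟨n, m⟩ ↦ ?_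
    calc ‖(μ n : ℝ) * b (n * m)‖
      _ = |(μ n : ℝ) / (n : ℕ)| * (‖x ^ (n * m : ℕ)‖ / (m : ℕ)) := by
        rw [mul_b_mul, norm_mul, ← pow_mul, norm_div (x ^ _), Real.norm_natCast, Real.norm_eq_abs]
      _ ≤ 1 * ‖x ^ (n * m : ℕ)‖ :=
        mul_le_mul (abs_moebius_div_natCast_le_one n)
          (div_le_self (norm_nonneg _) (mod_cast m.2)) (by positivity) zero_le_one
      _ = ‖((n : ℕ) : ℝ) ^ 0 * x ^ (n * m : ℕ)‖ := by rw [pow_zero, one_mul, one_mul]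
  calc ∑' n : ℕ+, (μ n : ℝ) / (n : ℕ) * -Real.log (1 - x ^ (n : ℕ))
    _ = ∑' n : ℕ+, ∑' m : ℕ+, (μ n : ℝ) * b (n * m) := by
      refine tsum_congr fun n ↦ ?_
      have hxn : |x ^ (n : ℕ)| < 1 := by
        rw [abs_pow]
        exact pow_lt_one₀ (abs_nonneg x) hx n.ne_zero
      simp only [mul_b_mul]
      exact ((hasSum_pnat_pow_div_neg_log_one_sub hxn).mul_left _).tsum_eq.symm
    _ = ∑' k : ℕ+, (∑ d ∈ (k : ℕ).divisors, (μ d : ℝ)) * b k :=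
      tsum_tsum_mul_eq_tsum_sum_divisors (a := fun n ↦ (μ n : ℝ)) hsum
    _ = ∑' k : ℕ+, if k = 1 then x else 0 := by
      refine tsum_congr fun k ↦ ?_
      rw [← Int.cast_sum, sum_divisors_moebius]
      split_ifs <;> simp_all [b]
    _ = x := tsum_ite_eq 1 _

lemma summable_norm_pow {ι R : Type*} [NormedRing R] [NormMulClass R] [NormOneClass R] {x : ι → R}
    (hx : Summable (‖x ·‖)) {n : ℕ} (hn : n ≠ 0) : Summable fun i ↦ ‖x i ^ n‖ := by
  obtain ⟨m, rfl⟩ := Nat.exists_eq_succ_of_ne_zero hn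
  simp only [pow_succ', norm_mul, norm_pow]
  exact Summable.mul_tendsto_const (by simpa only [norm_norm] using hx)
    (hx.tendsto_cofinite_zero.pow m)

lemma summable_prod_pow_pnat {ι R : Type*} [NormedDivisionRing R] [CompleteSpace R] {x : ι → R}
    (hx : Summable (‖x ·‖)) (hx1 : ∀ i, ‖x i‖ < 1) :
    Summable fun c : ι × ℕ+ ↦ x c.1 ^ (c.2 : ℕ) := by
  have hgeom (i : ι) : HasSum (fun n : ℕ+ ↦ ‖x i‖ ^ (n : ℕ)) (‖x i‖ * (1 - ‖x i‖)⁻¹) := by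
    rw [hasSum_pnat_iff_hasSum_succ (f := fun n : ℕ ↦ ‖x i‖ ^ n)]
    simpa only [pow_succ'] using
      (hasSum_geometric_of_lt_one (norm_nonneg (x i)) (hx1 i)).mul_left ‖x i‖
  have htendsto : Tendsto (fun i ↦ (1 - ‖x i‖)⁻¹) cofinite (𝓝 (1 - 0)⁻¹) :=
    (hx.tendsto_cofinite_zero.const_sub 1).inv₀ (by norm_num)
  refine Summable.of_norm ?_
  simp only [norm_pow]
  refine (summable_prod_of_nonneg fun c ↦ by positivity).mpr ⟨fun i ↦ (hgeom i).summable, ?_⟩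
  simpa only [(hgeom _).tsum_eq] using
    Summable.mul_tendsto_const (by simpa only [norm_norm] using hx) htendsto

lemma hasSum_moebius_div_mul_tsum_neg_log_one_sub_pow {ι : Type*} {x : ι → ℝ}
    (hx : Summable x) (hx1 : ∀ i, |x i| < 1) :
    HasSum (fun n : ℕ+ ↦ (μ n : ℝ) / (n : ℕ) * ∑' i, -Real.log (1 - x i ^ (n : ℕ)))
      (∑' i, x i) := by
  have hlog : Summable fun c : ℕ+ × ι ↦ Real.log (1 - x c.2 ^ (c.1 : ℕ)) :=
    Real.summable_log_one_add_of_summable (summable_prod_pow_pnat hx.norm hx1).prod_symm.neg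
  have hsum : Summable fun c : ℕ+ × ι ↦
      (μ c.1 : ℝ) / (c.1 : ℕ) * -Real.log (1 - x c.2 ^ (c.1 : ℕ)) := by
    refine hlog.norm.of_norm_bounded fun c ↦ ?_
    rw [norm_mul, norm_neg]
    exact mul_le_of_le_one_left (norm_nonneg _) (abs_moebius_div_natCast_le_one c.1)
  have hprod := hsum.prod
  simp only [tsum_mul_left] at hprod
  suffices hswap : ∑' i, x i =
      ∑' n : ℕ+, (μ n : ℝ) / (n : ℕ) * ∑' i, -Real.log (1 - x i ^ (n : ℕ)) from
    hswap ▸ hprod.hasSum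
  calc ∑' i, x i
    _ = ∑' i, ∑' n : ℕ+, (μ n : ℝ) / (n : ℕ) * -Real.log (1 - x i ^ (n : ℕ)) :=
      tsum_congr fun i ↦ (tsum_moebius_div_mul_neg_log_one_sub_pow (hx1 i)).symm
    _ = ∑' n : ℕ+, ∑' i, (μ n : ℝ) / (n : ℕ) * -Real.log (1 - x i ^ (n : ℕ)) :=
      hsum.tsum_comm (f := fun (n : ℕ+) i ↦ (μ n : ℝ) / (n : ℕ) * -Real.log (1 - x i ^ (n : ℕ)))
    _ = ∑' n : ℕ+, (μ n : ℝ) / (n : ℕ) * ∑' i, -Real.log (1 - x i ^ (n : ℕ)) := by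
      simp only [tsum_mul_left]

section LogEulerProduct

variable {f : ℕ →*₀ ℝ}

lemma abs_apply_prime_lt_one (hf : Summable (‖f ·‖)) (p : Nat.Primes) : |f p| < 1 :=
  hf.of_norm.norm_lt_one (f := f.toMonoidHom) p.2.one_lt

lemma one_sub_apply_prime_pos (hf : Summable (‖f ·‖)) (p : Nat.Primes) : 0 < 1 - f p :=
  sub_pos.mpr (lt_of_abs_lt (abs_apply_prime_lt_one hf p))

lemma summable_neg_log_one_sub_apply_prime (hf : Summable (‖f ·‖)) :
    Summable fun p : Nat.Primes ↦ -Real.log (1 - f p) :=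
  (Real.summable_log_one_add_of_summable (hf.of_norm.subtype Nat.Prime).neg).neg

lemma exp_tsum_neg_log_one_sub_apply_prime (hf : Summable (‖f ·‖)) :
    Real.exp (∑' p : Nat.Primes, -Real.log (1 - f p)) = ∑' n, f n := by
  have hexp := (summable_neg_log_one_sub_apply_prime hf).hasSum.rexp
  simp only [Function.comp_def, Real.exp_neg, Real.exp_log (one_sub_apply_prime_pos hf _)] at hexp
  exact hexp.unique (EulerProduct.eulerProduct_completely_multiplicative_hasProd hf)

lemma tsum_primes_notMem_neg_log_one_sub (hf : Summable (‖f ·‖)) (S : Finset Nat.Primes) :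
    ∑' p : {p // p ∉ S}, -Real.log (1 - f p.1) =
      Real.log ((∑' n, f n) * ∏ p ∈ S, (1 - f p)) := by
  have hsplit := (summable_neg_log_one_sub_apply_prime hf).sum_add_tsum_subtype_compl S
  rw [← exp_tsum_neg_log_one_sub_apply_prime hf, Real.log_mul (Real.exp_ne_zero _)
    (Finset.prod_pos fun p _ ↦ one_sub_apply_prime_pos hf p).ne', Real.log_exp,
    Real.log_prod fun p _ ↦ (one_sub_apply_prime_pos hf p).ne', ← hsplit,
    Finset.sum_neg_distrib]
  ring

end LogEulerProduct

theorem prime_zeta_tail_formula_general {f : ℕ →*₀ ℝ} (hf : Summable (‖f ·‖))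
    (S : Finset Nat.Primes) :
    HasSum (fun n : ℕ+ ↦ (μ n : ℝ) / (n : ℕ) *
        Real.log ((∑' k, f k ^ (n : ℕ)) * ∏ p ∈ S, (1 - f p ^ (n : ℕ))))
      (∑' p : {p // p ∉ S}, f p.1) := by
  have hlog (n : ℕ+) : ∑' p : {p // p ∉ S}, -Real.log (1 - f p.1 ^ (n : ℕ)) =
      Real.log ((∑' k, f k ^ (n : ℕ)) * ∏ p ∈ S, (1 - f p ^ (n : ℕ))) :=
    tsum_primes_notMem_neg_log_one_sub
      (f := (powMonoidWithZeroHom n.ne_zero).comp f) (summable_norm_pow hf n.ne_zero) S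
  simp only [← hlog]
  exact hasSum_moebius_div_mul_tsum_neg_log_one_sub_pow
    ((hf.of_norm.subtype Nat.Prime).subtype _) fun p ↦ abs_apply_prime_lt_one hf p

/-- The completely multiplicative function `n ↦ n ^ (-s)` whose sum is `realZeta s`, bundled so
that the Euler product applies. -/
noncomputable def realZetaSummandHom {s : ℝ} (hs : s ≠ 0) : ℕ →*₀ ℝ where
  toFun n := (n : ℝ) ^ (-s)
  map_zero' := by simp [hs]
  map_one' := by simp
  map_mul' m n := by
    rw [Nat.cast_mul, Real.mul_rpow m.cast_nonneg n.cast_nonneg]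

lemma realZetaSummandHom_apply {s : ℝ} (hs : s ≠ 0) (k : ℕ) :
    realZetaSummandHom hs k = (k : ℝ) ^ (-s) :=
  rfl

lemma realZetaSummandHom_pow {s : ℝ} (hs : s ≠ 0) (k n : ℕ) :
    realZetaSummandHom hs k ^ n = (k : ℝ) ^ (-(n * s)) := by
  rw [realZetaSummandHom_apply, mul_comm, ← neg_mul, Real.rpow_mul_natCast k.cast_nonneg]

lemma tsum_nat_rpow_neg_eq_realZeta {s : ℝ} (hs : s ≠ 0) :
    ∑' k : ℕ, (k : ℝ) ^ (-s) = realZeta s :=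
  (tsum_pnat_eq_tsum_of_eq_zero (f := fun k : ℕ ↦ (k : ℝ) ^ (-s)) (by simp [hs])).symm

lemma hasSum_moebius_div_mul_log_realZeta_mul_prod {α : ℝ} (hα : 1 < α) (S : Finset Nat.Primes) :
    HasSum (fun n : ℕ+ ↦ (μ n : ℝ) / (n : ℕ) * Real.log (realZeta ((n : ℕ) * α) *
        ∏ p ∈ S, (1 - (p : ℝ) ^ (-((n : ℕ) * α)))))
      (∑' p : {p // p ∉ S}, (p.1 : ℝ) ^ (-α)) := by
  have hα0 : α ≠ 0 := by positivity
  have hsum : Summable (‖realZetaSummandHom hα0 ·‖) :=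
    (Real.summable_nat_rpow.mpr (neg_lt_neg hα)).norm
  have hzeta (n : ℕ+) : ∑' k : ℕ, (k : ℝ) ^ (-((n : ℕ) * α)) = realZeta ((n : ℕ) * α) :=
    tsum_nat_rpow_neg_eq_realZeta (mul_ne_zero (Nat.cast_ne_zero.mpr n.ne_zero) hα0)
  have key := prime_zeta_tail_formula_general hsum S
  simp only [realZetaSummandHom_pow, hzeta] at key
  simpa only [realZetaSummandHom_apply] using key

/-- The primes `p ≤ N`, as a finite set in the subtype of primes over which Euler products run. -/
def primesLE (N : ℕ) : Finset Nat.Primes := (Finset.range (N + 1)).subtype Nat.Prime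

lemma notMem_primesLE {N : ℕ} {p : Nat.Primes} : p ∉ primesLE N ↔ N < p :=
  Finset.mem_subtype.not.trans (Finset.mem_range_succ_iff.not.trans not_le)

lemma prod_filter_prime_range_succ {M : Type*} [CommMonoid M] (N : ℕ) (g : ℕ → M) :
    ∏ p ∈ (Finset.range (N + 1)).filter Nat.Prime, g p = ∏ p ∈ primesLE N, g p :=
  (Finset.prod_subtype_eq_prod_filter g).symm

lemma tsum_primes_gt {M : Type*} [AddCommMonoid M] [TopologicalSpace M] (N : ℕ) (g : ℕ → M) :
    ∑' p : {p : Nat.Primes // N < p}, g p = ∑' p : {p // p ∉ primesLE N}, g p.1 :=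
  ((Equiv.subtypeEquivRight fun _ ↦ notMem_primesLE).tsum_eq
    fun p : {p : Nat.Primes // N < p} ↦ g p).symm

/-- For real `α > 1` and `N ≥ 2`, the tail of the prime zeta function satisfies
`∑_{p > N} p^{-α} = ∑_{n=1}^∞ (μ(n)/n) ln(ζ(nα) ∏_{p ≤ N} (1 - p^{-nα}))`,
the series over `n` being convergent. -/
theorem prime_zeta_tail_formula (α : ℝ) (hα : 1 < α) (N : ℕ) (hN : 2 ≤ N) :
    Summable (fun n : ℕ+ =>
        ((ArithmeticFunction.moebius (n : ℕ) : ℝ) / (n : ℕ)) *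
          Real.log (realZeta ((n : ℕ) * α) *
            ∏ p ∈ (Finset.range (N + 1)).filter Nat.Prime, (1 - (p : ℝ) ^ (-((n : ℕ) * α)))))
      ∧
      (∑' p : {p : Nat.Primes // N < (p : ℕ)}, ((p : ℕ) : ℝ) ^ (-α)) =
        ∑' n : ℕ+,
          ((ArithmeticFunction.moebius (n : ℕ) : ℝ) / (n : ℕ)) *
            Real.log (realZeta ((n : ℕ) * α) *
              ∏ p ∈ (Finset.range (N + 1)).filter Nat.Prime,
                (1 - (p : ℝ) ^ (-((n : ℕ) * α)))) := by
  have h := hasSum_moebius_div_mul_log_realZeta_mul_prod hα (primesLE N)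
  simp only [prod_filter_prime_range_succ N fun p ↦ 1 - (p : ℝ) ^ (-(_ * α)),
    tsum_primes_gt N fun p ↦ (p : ℝ) ^ (-α)]
  exact ⟨h.summable, h.tsum_eq.symm⟩
end

section
/- Let a, b be real numbers with 0 < a < 1 and a·b > 1. Then the Weierstrass function F_{a,b}(t) = ∑_{n=0}^∞ aⁿ·cos(bⁿ·t) is nowhere differentiable, and it is uniformly Hölder continuous with exponent s = −ln(a)/ln(b): there exists C > 0 such that |F_{a,b}(t) − F_{a,b}(t₀)| ≤ C·|t − t₀|^s for all t, t₀ ∈ ℝ. -/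
/-!
Let `f` be bounded and differentiable at `t`, and let `χ` be a kernel whose zeroth and first moments
vanish. Then `r ∫ f (t + y / r) χ y dy → 0` as `|r| → ∞`, since the constant and linear parts of `f`
at `t` are invisible to `χ`. If `𝓕 χ` vanishes outside `(q⁻¹, q)` and `𝓕 χ 1 = 1`, both moments
of `χ` do vanish; and if the frequencies of `∑ₙ cₙ cos (ωₙ t)` grow at least by the factor `q` from
each term to the next, the choice `r = ωₙ / 2π` makes `χ` annihilate every term but the `n`-th, so
that `cₙ ωₙ → 0` whenever the series is differentiable somewhere. For the Weierstrass function,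
`cₙ ωₙ = (a b)ⁿ` does not tend to `0`.

For the Hölder bound, the increment over a distance `h` is split at the index `N` with `bᴺ ≈ 1 / h`:
the terms below `N` are estimated by their Lipschitz constants, the others by their size.
-/

open Filter MeasureTheory Topology FourierTransform
open scoped SchwartzMap Real

section Kernel

variable {V E : Type*} [NormedAddCommGroup V] [InnerProductSpace ℝ V] [FiniteDimensional ℝ V]
  [MeasurableSpace V] [BorelSpace V] [NormedAddCommGroup E] [NormedSpace ℂ E]

theorem exists_schwartzMap_fourier_eq_one_of_mem_nhds {ξ₀ : V} {s : Set V} (hs : s ∈ 𝓝 ξ₀) :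
    ∃ χ : 𝓢(V, ℂ), 𝓕 (χ : V → ℂ) ξ₀ = 1 ∧ ∀ ξ ∉ s, 𝓕 (χ : V → ℂ) ξ = 0 := by
  obtain ⟨φ, hφs, hφc, hφ, -, hφ₀⟩ := exists_contDiff_tsupport_subset (n := ⊤) hs
  let ψ : 𝓢(V, ℂ) := (hφc.comp_left Complex.ofReal_zero).toSchwartzMap
    (Complex.ofRealCLM.contDiff.comp hφ)
  have hψ (ξ : V) : 𝓕 ((𝓕⁻ ψ : 𝓢(V, ℂ)) : V → ℂ) ξ = φ ξ := by
    rw [← SchwartzMap.fourier_coe, fourier_fourierInv_eq]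
    rfl
  refine ⟨𝓕⁻ ψ, by rw [hψ, hφ₀, Complex.ofReal_one], fun ξ hξ => ?_⟩
  rw [hψ, image_eq_zero_of_notMem_tsupport (fun h => hξ (hφs h)), Complex.ofReal_zero]

theorem integral_eq_fourier_zero (f : V → E) : ∫ v, f v = 𝓕 f 0 := by
  simp [Real.fourier_eq]

theorem integral_id_smul_eq_zero_of_fourier_eventuallyEq_zero {f : ℝ → E} (hf : Integrable f)
    (hf' : Integrable fun x : ℝ => x • f x) (h : 𝓕 f =ᶠ[𝓝 0] 0) : ∫ x : ℝ, x • f x = 0 := by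
  have hderiv : ∫ x : ℝ, (-2 * π * Complex.I * x) • f x = 0 := by
    rw [integral_eq_fourier_zero, ← Real.deriv_fourier hf hf', h.deriv_eq]
    exact deriv_const _ _
  have hne : (-2 * π * Complex.I : ℂ) ≠ 0 := by simp [Real.pi_ne_zero]
  simp only [mul_smul _ (Complex.ofReal _), Complex.coe_smul] at hderiv
  rw [integral_smul] at hderiv
  exact (smul_eq_zero.1 hderiv).resolve_left hne

theorem integrable_id_smul_schwartzMap (χ : 𝓢(ℝ, E)) : Integrable fun y : ℝ => y • χ y :=
  (χ.integrable_pow_mul volume 1).mono' (by fun_prop) (.of_forall fun y => by simp [norm_smul])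

end Kernel

section BlowUp

variable {V F : Type*} [NormedAddCommGroup V] [NormedSpace ℝ V] [NormedAddCommGroup F]
  [NormedSpace ℝ F]

theorem exists_norm_add_sub_le_of_differentiableAt {f : V → F} {x : V} {M : ℝ}
    (hf : DifferentiableAt ℝ f x) (hM : ∀ y, ‖f y‖ ≤ M) :
    ∃ K, ∀ v, ‖f (x + v) - f x‖ ≤ K * ‖v‖ := by
  obtain ⟨L, hL⟩ := hf.isBigO_sub.bound
  obtain ⟨δ, hδ, hball⟩ := Metric.eventually_nhds_iff.1 hL
  have hM₀ : 0 ≤ M := (norm_nonneg _).trans (hM x)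
  refine ⟨max L (2 * M / δ), fun v => ?_⟩
  rcases lt_or_ge ‖v‖ δ with hv | hv
  · calc ‖f (x + v) - f x‖ ≤ L * ‖v‖ := by simpa using hball (y := x + v) (by simpa using hv)
      _ ≤ _ := by gcongr; exact le_max_left _ _
  · calc ‖f (x + v) - f x‖ ≤ M + M := norm_sub_le_of_le (hM _) (hM _)
      _ = 2 * M / δ * δ := by field_simp; ring
      _ ≤ 2 * M / δ * ‖v‖ := by gcongr
      _ ≤ _ := by gcongr; exact le_max_right _ _

theorem tendsto_smul_integral_comp_smul {α : Type*} {l : Filter α} [l.IsCountablyGenerated]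
    {f : ℝ → ℝ} {χ : ℝ → F} {t f' M : ℝ} {r : α → ℝ} (hfm : Measurable f) (hM : ∀ y, ‖f y‖ ≤ M)
    (hf : HasDerivAt f f' t) (hχ : Integrable χ) (hχ' : Integrable fun y : ℝ => y • χ y)
    (hχ₀ : ∫ y, χ y = 0) (hr : Tendsto (fun n => |r n|) l atTop) :
    Tendsto (fun n => r n • ∫ y, f (t + (r n)⁻¹ * y) • χ y) l (𝓝 (f' • ∫ y : ℝ, y • χ y)) := by
  obtain ⟨K, hK⟩ := exists_norm_add_sub_le_of_differentiableAt hf.differentiableAt hM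
  have hquot (n : α) : r n • ∫ y, f (t + (r n)⁻¹ * y) • χ y
      = ∫ y, (r n * (f (t + (r n)⁻¹ * y) - f t)) • χ y := by
    have hint : Integrable fun y => f (t + (r n)⁻¹ * y) • χ y :=
      hχ.bdd_smul M (hfm.comp (by fun_prop)).aestronglyMeasurable (.of_forall fun y => hM _)
    simp only [mul_smul, sub_smul]
    rw [integral_smul, integral_sub hint (hχ.fun_smul _), integral_smul, hχ₀, smul_zero, sub_zero]
  have hlim (y : ℝ) : Tendsto (fun n => r n * (f (t + (r n)⁻¹ * y) - f t)) l (𝓝 (y * f')) := by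
    simpa using hf.hasFDerivAt.lim y hr
  have hbound {s : ℝ} (hs : s ≠ 0) (y : ℝ) : |s * (f (t + s⁻¹ * y) - f t)| ≤ K * |y| := by
    calc |s * (f (t + s⁻¹ * y) - f t)| ≤ |s| * (K * |s⁻¹ * y|) := by
          rw [abs_mul]; gcongr; exact hK _
      _ = K * |y| := by rw [abs_mul, abs_inv]; field_simp
  simp only [hquot, ← integral_smul, smul_smul]
  refine tendsto_integral_filter_of_dominated_convergence (fun y => K * ‖y • χ y‖)
    (.of_forall fun n => (by fun_prop : Measurable _).aestronglyMeasurable.smul hχ.1) ?_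
    (hχ'.norm.const_mul K) (.of_forall fun y => ?_)
  · filter_upwards [hr.eventually_gt_atTop 0] with n hn
    refine .of_forall fun y => ?_
    rw [norm_smul, norm_smul, ← mul_assoc]
    gcongr
    exact hbound (abs_pos.1 hn) y
  · simpa only [mul_comm] using (hlim y).smul_const (χ y)

end BlowUp

theorem integral_tsum_smul_of_norm_le {α ι F : Type*} [Countable ι] [MeasurableSpace α]
    {μ : Measure α} [NormedAddCommGroup F] [NormedSpace ℝ F] {f : ι → α → ℝ} {χ : α → F}
    {u : ι → ℝ} (hχ : Integrable χ μ) (hu : Summable u) (hf : ∀ n, AEStronglyMeasurable (f n) μ)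
    (hfu : ∀ n x, ‖f n x‖ ≤ u n) :
    ∫ x, (∑' n, f n x) • χ x ∂μ = ∑' n, ∫ x, f n x • χ x ∂μ := by
  have hint (n : ι) : Integrable (fun x => f n x • χ x) μ :=
    hχ.bdd_smul (u n) (hf n) (.of_forall (hfu n))
  have hnorm (n : ι) : ∫ x, ‖f n x • χ x‖ ∂μ ≤ u n * ∫ x, ‖χ x‖ ∂μ := by
    rw [← integral_const_mul]
    refine integral_mono (hint n).norm (hχ.norm.const_mul _) fun x => ?_
    rw [norm_smul]
    gcongr
    exact hfu n x
  have hsummable : Summable fun n => ∫ x, ‖f n x • χ x‖ ∂μ :=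
    (hu.mul_right _).of_nonneg_of_le (fun n => integral_nonneg fun x => norm_nonneg _) hnorm
  have htsum (x : α) : (∑' n, f n x) • χ x = ∑' n, f n x • χ x :=
    ((Summable.of_norm_bounded hu (hfu · x)).tsum_smul_const (χ x)).symm
  simp only [htsum]
  exact (integral_tsum_of_summable_integral_norm hint hsummable).symm

section CosineSeries

variable {ι : Type*} {c ω : ι → ℝ}

/-- The cosine series `∑ₙ cₙ cos (ωₙ t)` with amplitudes `c` and arbitrary real frequencies `ω`;
the Weierstrass function is the case `cₙ = aⁿ`, `ωₙ = bⁿ`. -/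
noncomputable def cosSeries (c ω : ι → ℝ) (t : ℝ) : ℝ := ∑' n, c n * Real.cos (ω n * t)

theorem norm_mul_cos_le (x θ : ℝ) : ‖x * Real.cos θ‖ ≤ |x| := by
  simpa [abs_mul] using mul_le_of_le_one_right (abs_nonneg x) (Real.abs_cos_le_one θ)

theorem continuous_cosSeries (hc : Summable fun n => |c n|) : Continuous (cosSeries c ω) :=
  continuous_tsum (fun n => by fun_prop) hc fun _ _ => norm_mul_cos_le _ _

theorem norm_cosSeries_le (hc : Summable fun n => |c n|) (t : ℝ) :
    ‖cosSeries c ω t‖ ≤ ∑' n, |c n| :=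
  tsum_of_norm_bounded hc.hasSum fun _ => norm_mul_cos_le _ _

theorem integral_cos_smul {χ : ℝ → ℂ} (hχ : Integrable χ) (θ ξ : ℝ) :
    ∫ y, Real.cos (θ + 2 * π * ξ * y) • χ y =
      (Complex.exp (θ * Complex.I) * 𝓕 χ (-ξ) + Complex.exp (-θ * Complex.I) * 𝓕 χ ξ) / 2 := by
  have hint (η : ℝ) : Integrable fun y : ℝ => Complex.exp (↑(-2 * π * y * η) * Complex.I) • χ y :=
    hχ.bdd_smul 1 (by fun_prop) (.of_forall fun y => (Complex.norm_exp_ofReal_mul_I _).le)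
  simp only [Real.fourier_real_eq_integral_exp_smul]
  rw [← integral_const_mul, ← integral_const_mul,
    ← integral_add ((hint _).const_mul _) ((hint _).const_mul _), ← integral_div]
  congr with y
  rw [Complex.real_smul, Complex.ofReal_cos, Complex.cos]
  simp only [smul_eq_mul, ← mul_assoc, ← Complex.exp_add]
  push_cast
  ring_nf

theorem integral_cosSeries_smul [Countable ι] (hc : Summable fun n => |c n|) {χ : ℝ → ℂ}
    (hχ : Integrable χ) (t r : ℝ) :
    ∫ y, cosSeries c ω (t + 2 * π * r * y) • χ y =
      ∑' n, c n • ((Complex.exp (↑(ω n * t) * Complex.I) * 𝓕 χ (-(ω n * r)) +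
        Complex.exp (-↑(ω n * t) * Complex.I) * 𝓕 χ (ω n * r)) / 2) := by
  have hsum := integral_tsum_smul_of_norm_le hχ hc
    (f := fun n y => c n * Real.cos (ω n * (t + 2 * π * r * y)))
    (fun n => (by fun_prop : Continuous _).aestronglyMeasurable) (fun n y => norm_mul_cos_le _ _)
  refine hsum.trans (tsum_congr fun n => ?_)
  have harg (y : ℝ) : ω n * (t + 2 * π * r * y) = ω n * t + 2 * π * (ω n * r) * y := by ring
  simp only [harg, mul_smul]
  rw [integral_smul, integral_cos_smul hχ]

theorem integral_cosSeries_smul_eq_single [Countable ι] (hc : Summable fun n => |c n|) {χ : ℝ → ℂ}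
    (hχ : Integrable χ) {q : ℝ} (hq : 0 < q) (hχ₁ : 𝓕 χ 1 = 1)
    (hχ₀ : ∀ ξ ∉ Set.Ioo q⁻¹ q, 𝓕 χ ξ = 0) {n : ι} (hn : ω n ≠ 0)
    (hgap : ∀ m ≠ n, q * |ω m| ≤ |ω n| ∨ q * |ω n| ≤ |ω m|) (t : ℝ) :
    ∫ y, cosSeries c ω (t + (ω n / (2 * π))⁻¹ * y) • χ y =
      c n • (Complex.exp (-↑(ω n * t) * Complex.I) / 2) := by
  have hχ_neg {ξ : ℝ} (hξ : ξ ≤ q⁻¹) : 𝓕 χ ξ = 0 := hχ₀ ξ fun h => hξ.not_gt h.1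
  have hratio {m : ι} (hm : m ≠ n) :
      𝓕 χ (ω m * (ω n)⁻¹) = 0 ∧ 𝓕 χ (-(ω m * (ω n)⁻¹)) = 0 := by
    have hξ : |ω m * (ω n)⁻¹| ≤ q⁻¹ ∨ q ≤ |ω m * (ω n)⁻¹| := by
      have := abs_pos.2 hn
      rw [abs_mul, abs_inv, ← div_eq_mul_inv, div_le_iff₀ this, le_div_iff₀ this,
        inv_mul_eq_div, le_div_iff₀' hq]
      exact hgap m hm
    have hnotMem {ξ : ℝ} (hξ : |ξ| ≤ q⁻¹ ∨ q ≤ |ξ|) : ξ ∉ Set.Ioo q⁻¹ q := by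
      rintro ⟨h₁, h₂⟩
      rw [abs_of_pos ((inv_pos.2 hq).trans h₁)] at hξ
      exact hξ.elim h₁.not_ge h₂.not_ge
    exact ⟨hχ₀ _ (hnotMem hξ), hχ₀ _ (hnotMem (by rwa [abs_neg]))⟩
  have hscale : (ω n / (2 * π))⁻¹ = 2 * π * (ω n)⁻¹ := by rw [inv_div, div_eq_mul_inv]
  rw [hscale, integral_cosSeries_smul hc hχ, tsum_eq_single n]
  · rw [mul_inv_cancel₀ hn, hχ₁, hχ_neg (by linarith [inv_pos.2 hq]), mul_zero, zero_add, mul_one]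
  · intro m hm
    rw [(hratio hm).1, (hratio hm).2, mul_zero, mul_zero, add_zero, zero_div, smul_zero]

theorem mul_le_or_mul_le_of_forall_mul_le_succ {u : ℕ → ℝ} {q : ℝ} (hu : ∀ n, 0 ≤ u n)
    (hq : 1 ≤ q) (hgap : ∀ n, q * u n ≤ u (n + 1)) {m n : ℕ} (hmn : m ≠ n) :
    q * u m ≤ u n ∨ q * u n ≤ u m := by
  have hmono : Monotone u := monotone_nat_of_le_succ fun n =>
    (le_mul_of_one_le_left (hu n) hq).trans (hgap n)
  exact hmn.lt_or_gt.imp (fun h => (hgap m).trans (hmono h)) fun h => (hgap n).trans (hmono h)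

theorem tendsto_mul_of_differentiableAt_cosSeries {c ω : ℕ → ℝ} (hc : Summable fun n => |c n|)
    {q : ℝ} (hq : 1 < q) (hω₀ : ω 0 ≠ 0) (hgap : ∀ n, q * |ω n| ≤ |ω (n + 1)|) {t : ℝ}
    (hd : DifferentiableAt ℝ (cosSeries c ω) t) :
    Tendsto (fun n => c n * ω n) atTop (𝓝 0) := by
  have hq₀ : 0 < q := by linarith
  have hω (n : ℕ) : ω n ≠ 0 := abs_pos.1 <|
    (mul_pos (pow_pos hq₀ n) (abs_pos.2 hω₀)).trans_le (geom_le hq₀.le n fun k _ => hgap k)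
  have hsep (n m : ℕ) (hm : m ≠ n) : q * |ω m| ≤ |ω n| ∨ q * |ω n| ≤ |ω m| :=
    mul_le_or_mul_le_of_forall_mul_le_succ (fun _ => abs_nonneg _) hq.le hgap hm
  have hω_atTop : Tendsto (fun n => |ω n / (2 * π)|) atTop atTop := by
    simp only [abs_div]
    exact (tendsto_atTop_of_geom_le (abs_pos.2 hω₀) hq hgap).atTop_div_const (by positivity)
  obtain ⟨χ, hχ₁, hχ₀⟩ :=
    exists_schwartzMap_fourier_eq_one_of_mem_nhds (Ioo_mem_nhds (inv_lt_one_of_one_lt₀ hq) hq)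
  have hχ' := integrable_id_smul_schwartzMap χ
  have hχ_nhds : 𝓕 (χ : ℝ → ℂ) =ᶠ[𝓝 0] 0 := by
    filter_upwards [Iio_mem_nhds (inv_pos.2 hq₀)] with ξ hξ
    exact hχ₀ ξ fun h => lt_asymm hξ h.1
  have hχ_mean : ∫ y, χ y = 0 := (integral_eq_fourier_zero _).trans hχ_nhds.eq_of_nhds
  have hlim := tendsto_smul_integral_comp_smul (continuous_cosSeries hc).measurable
    (norm_cosSeries_le hc) hd.hasDerivAt χ.integrable hχ' hχ_mean hω_atTop
  simp only [integral_cosSeries_smul_eq_single hc χ.integrable hq₀ hχ₁ hχ₀ (hω _) (hsep _),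
    integral_id_smul_eq_zero_of_fourier_eventuallyEq_zero χ.integrable hχ' hχ_nhds,
    smul_zero] at hlim
  have hnorm (n : ℕ) : ‖c n * ω n‖ = 4 * π *
      ‖(ω n / (2 * π)) • c n • (Complex.exp (-↑(ω n * t) * Complex.I) / 2)‖ := by
    rw [norm_smul, norm_smul, norm_div, norm_div, ← Complex.ofReal_neg,
      Complex.norm_exp_ofReal_mul_I, norm_mul, Complex.norm_ofNat,
      Real.norm_of_nonneg Real.two_pi_pos.le]
    field_simp
    ring
  rw [tendsto_zero_iff_norm_tendsto_zero]
  simpa only [hnorm, norm_zero, mul_zero] using hlim.norm.const_mul (4 * π)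

end CosineSeries

section Holder

theorem exists_pow_le_rpow_and_mul_pow_sub_one_mul_le {a b h : ℝ} (ha₀ : 0 < a) (ha₁ : a < 1)
    (hb : 1 < b) (hh : 0 < h) :
    ∃ N : ℕ, a ^ N ≤ h ^ Real.logb b a⁻¹ ∧ ((a * b) ^ N - 1) * h ≤ b * h ^ Real.logb b a⁻¹ := by
  have hb₀ : 0 < b := by linarith
  have hs : 0 < Real.logb b a⁻¹ := Real.logb_pos hb ((one_lt_inv₀ ha₀).2 ha₁)
  rcases le_or_gt 1 h with h₁ | h₁
  · refine ⟨0, by simpa using Real.one_le_rpow h₁ hs.le, ?_⟩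
    simp only [pow_zero, sub_self, zero_mul]
    positivity
  obtain ⟨N, hN, hN'⟩ := exists_nat_pow_near ((one_lt_inv₀ hh).2 h₁).le hb
  have ha_pow : a ^ (N + 1) ≤ h ^ Real.logb b a⁻¹ := by
    have hinv : (h⁻¹) ^ Real.logb b a⁻¹ ≤ (a⁻¹) ^ (N + 1) := by
      calc (h⁻¹) ^ Real.logb b a⁻¹ ≤ (b ^ (N + 1)) ^ Real.logb b a⁻¹ := by gcongr
        _ = (a⁻¹) ^ (N + 1) := by
          rw [← Real.rpow_pow_comm hb₀.le, Real.rpow_logb hb₀ hb.ne' (inv_pos.2 ha₀)]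
    rwa [Real.inv_rpow hh.le, inv_pow, inv_le_inv₀ (by positivity) (by positivity)] at hinv
  refine ⟨N + 1, ha_pow, ?_⟩
  calc ((a * b) ^ (N + 1) - 1) * h ≤ (a * b) ^ (N + 1) * h := by gcongr; linarith
    _ = b * a ^ (N + 1) * (b ^ N * h) := by ring
    _ ≤ b * a ^ (N + 1) * (h⁻¹ * h) := by gcongr
    _ = b * a ^ (N + 1) := by rw [inv_mul_cancel₀ hh.ne', mul_one]
    _ ≤ b * h ^ Real.logb b a⁻¹ := by gcongr

variable {X E : Type*} [PseudoMetricSpace X] [NormedAddCommGroup E] [CompleteSpace E]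

theorem norm_tsum_le_of_le_geometric_of_le_geometric {a r L M : ℝ} (ha₀ : 0 ≤ a) (ha₁ : a < 1)
    (hr : r ≠ 1) {g : ℕ → E} (hgM : ∀ n, ‖g n‖ ≤ M * a ^ n) (hgL : ∀ n, ‖g n‖ ≤ L * r ^ n) (N : ℕ) :
    ‖∑' n, g n‖ ≤ L * ((r ^ N - 1) / (r - 1)) + M * a ^ N * (1 - a)⁻¹ := by
  have hgeom := hasSum_geometric_of_lt_one ha₀ ha₁
  have hg : Summable g := .of_norm_bounded (hgeom.summable.mul_left M) hgM
  have hhead : ‖∑ n ∈ Finset.range N, g n‖ ≤ L * ((r ^ N - 1) / (r - 1)) := by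
    rw [← geom_sum_eq hr, Finset.mul_sum]
    exact norm_sum_le_of_le _ fun n _ => hgL n
  have htail : ‖∑' n, g (n + N)‖ ≤ M * a ^ N * (1 - a)⁻¹ :=
    tsum_of_norm_bounded (hgeom.mul_left _) fun n =>
      (hgM _).trans_eq (by ring)
  rw [← hg.sum_add_tsum_nat_add N]
  exact norm_add_le_of_le hhead htail

theorem norm_tsum_sub_tsum_le_rpow {f : ℕ → X → E} {a b L M : ℝ} (ha₀ : 0 < a) (ha₁ : a < 1)
    (hab : 1 < a * b) (hM : ∀ n x, ‖f n x‖ ≤ M * a ^ n)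
    (hL : ∀ n x y, ‖f n x - f n y‖ ≤ L * dist x y * (a * b) ^ n) (x y : X) :
    ‖∑' n, f n x - ∑' n, f n y‖ ≤
      (L * b / (a * b - 1) + 2 * M / (1 - a)) * dist x y ^ Real.logb b a⁻¹ := by
  have hb : 1 < b := by nlinarith
  rcases (dist_nonneg (x := x) (y := y)).eq_or_lt' with hd | hd
  · have hfxy (n : ℕ) : f n x = f n y := by simpa [hd, sub_eq_zero] using hL n x y
    simp only [hfxy, sub_self, norm_zero]
    rw [hd, Real.zero_rpow (Real.logb_pos hb ((one_lt_inv₀ ha₀).2 ha₁)).ne', mul_zero]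
  have hL₀ : 0 ≤ L := by
    have := (norm_nonneg _).trans (hL 0 x y)
    rw [pow_zero, mul_one] at this
    exact nonneg_of_mul_nonneg_left this hd
  have hM₀ : 0 ≤ M := by simpa using (norm_nonneg _).trans (hM 0 x)
  have hsum (z : X) : Summable fun n => f n z :=
    .of_norm_bounded ((summable_geometric_of_lt_one ha₀.le ha₁).mul_left M) (hM · z)
  have hsub (n : ℕ) : ‖f n x - f n y‖ ≤ 2 * M * a ^ n :=
    (norm_sub_le_of_le (hM n x) (hM n y)).trans_eq (by ring)
  obtain ⟨N, hN, hN'⟩ := exists_pow_le_rpow_and_mul_pow_sub_one_mul_le ha₀ ha₁ hb hd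
  have : 0 < a * b - 1 := sub_pos.2 hab
  have : 0 < 1 - a := sub_pos.2 ha₁
  rw [← (hsum x).tsum_sub (hsum y)]
  calc ‖∑' n, (f n x - f n y)‖
      ≤ L * dist x y * (((a * b) ^ N - 1) / (a * b - 1)) + 2 * M * a ^ N * (1 - a)⁻¹ :=
        norm_tsum_le_of_le_geometric_of_le_geometric ha₀.le ha₁ hab.ne' hsub (hL · x y) N
    _ = L / (a * b - 1) * (((a * b) ^ N - 1) * dist x y) + 2 * M / (1 - a) * a ^ N := by ring
    _ ≤ L / (a * b - 1) * (b * dist x y ^ Real.logb b a⁻¹) +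
          2 * M / (1 - a) * dist x y ^ Real.logb b a⁻¹ := by gcongr
    _ = _ := by ring

end Holder

section Weierstrass

variable {a b : ℝ}

theorem not_differentiableAt_weierstrass (ha : |a| < 1) (hab : 1 ≤ |a * b|) (t : ℝ) :
    ¬ DifferentiableAt ℝ (cosSeries (fun n : ℕ => a ^ n) fun n => b ^ n) t := by
  intro hd
  have hb : 1 < |b| := by
    rw [abs_mul] at hab
    nlinarith [abs_nonneg a, abs_nonneg b]
  have hlim := tendsto_mul_of_differentiableAt_cosSeries
    (by simpa only [abs_pow] using summable_geometric_of_lt_one (abs_nonneg a) ha) hb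
    (by simp) (fun n => by rw [pow_succ', abs_mul]) hd
  simp only [← mul_pow, tendsto_pow_atTop_nhds_zero_iff] at hlim
  exact hab.not_gt hlim

theorem abs_weierstrass_sub_le (ha : |a| < 1) (hab : 1 < |a * b|) (t t₀ : ℝ) :
    |cosSeries (fun n : ℕ => a ^ n) (fun n => b ^ n) t -
        cosSeries (fun n : ℕ => a ^ n) (fun n => b ^ n) t₀| ≤
      (|b| / (|a * b| - 1) + 2 / (1 - |a|)) * |t - t₀| ^ (-Real.log |a| / Real.log |b|) := by
  have ha₀ : 0 < |a| := abs_pos.2 fun h => by norm_num [h] at hab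
  have hsup (n : ℕ) (x : ℝ) : ‖a ^ n * Real.cos (b ^ n * x)‖ ≤ 1 * |a| ^ n := by
    simpa using norm_mul_cos_le (a ^ n) (b ^ n * x)
  have hlip (n : ℕ) (x y : ℝ) : ‖a ^ n * Real.cos (b ^ n * x) - a ^ n * Real.cos (b ^ n * y)‖ ≤
      1 * dist x y * (|a| * |b|) ^ n := by
    calc ‖a ^ n * Real.cos (b ^ n * x) - a ^ n * Real.cos (b ^ n * y)‖
        = |a ^ n| * |Real.cos (b ^ n * x) - Real.cos (b ^ n * y)| := by
          rw [← mul_sub, norm_mul, Real.norm_eq_abs, Real.norm_eq_abs]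
      _ ≤ |a ^ n| * |b ^ n * x - b ^ n * y| :=
          mul_le_mul_of_nonneg_left (Real.abs_cos_sub_cos_le _ _) (abs_nonneg _)
      _ = 1 * dist x y * (|a| * |b|) ^ n := by
          rw [← mul_sub, abs_mul, Real.dist_eq, abs_pow, abs_pow, mul_pow]
          ring
  rw [abs_mul] at hab ⊢
  have h := norm_tsum_sub_tsum_le_rpow ha₀ ha hab hsup hlip t t₀
  rwa [Real.logb, Real.log_inv, one_mul, mul_one] at h

theorem weierstrass_nowhere_differentiable_holder_general (a b : ℝ) (ha : |a| < 1)
    (hab : 1 ≤ |a * b|) :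
    (∀ t : ℝ, ¬ DifferentiableAt ℝ (fun t : ℝ => ∑' n : ℕ, a ^ n * Real.cos (b ^ n * t)) t)
      ∧ (1 < |a * b| → ∃ C > (0 : ℝ), ∀ t t₀ : ℝ,
          |(∑' n : ℕ, a ^ n * Real.cos (b ^ n * t)) -
              (∑' n : ℕ, a ^ n * Real.cos (b ^ n * t₀))| ≤
            C * |t - t₀| ^ (-Real.log |a| / Real.log |b|)) := by
  refine ⟨not_differentiableAt_weierstrass ha hab, fun hab' =>
    ⟨_, ?_, abs_weierstrass_sub_le ha hab'⟩⟩
  have : 0 < |a * b| - 1 := sub_pos.2 hab'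
  have : 0 < 1 - |a| := sub_pos.2 ha
  positivity

end Weierstrass

/-- For `0 < a < 1` with `a b > 1`, the Weierstrass function
`F_{a,b}(t) = ∑_{n=0}^∞ aⁿ cos(bⁿ t)` is nowhere differentiable, and it is uniformly
Hölder continuous with exponent `s = -ln a / ln b`. -/
theorem weierstrass_nowhere_differentiable_holder (a b : ℝ) (ha0 : 0 < a) (ha1 : a < 1)
    (hab : 1 < a * b) :
    (∀ t : ℝ, ¬ DifferentiableAt ℝ (fun t : ℝ => ∑' n : ℕ, a ^ n * Real.cos (b ^ n * t)) t)
      ∧ ∃ C > (0 : ℝ), ∀ t t₀ : ℝ,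
          |(∑' n : ℕ, a ^ n * Real.cos (b ^ n * t)) -
              (∑' n : ℕ, a ^ n * Real.cos (b ^ n * t₀))| ≤
            C * |t - t₀| ^ (-Real.log a / Real.log b) := by
  have hab' : 1 < |a * b| := hab.trans_le (le_abs_self _)
  simpa only [Real.log_abs, hab', true_imp_iff] using
    weierstrass_nowhere_differentiable_holder_general a b (by rwa [abs_of_pos ha0]) hab'.le
end
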